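/- Let f: ℝ^n → ℝ^n, n ≥ 2, be a homeomorphism such that K^{fine}_f(x) ≤ K < ∞ for every x ∈ ℝ^n. Then f is quasiconformal: f ∈ W^{1,n}_{loc}(ℝ^n; ℝ^n) and ‖∇f(x)‖^n ≤ K'|det ∇f(x)| a.e. for some constant K' < ∞. -/

import Mathlib

open MeasureTheory Metric Set Filter ENNReal NNReal Topology

noncomputable section

/-- Euclidean space `ℝⁿ`. -/
abbrev En (n : ℕ) : Type := EuclideanSpace ℝ (Fin n)

variable {n : ℕ}

/-- `g` is the weak (distributional) gradient of `u : ℝⁿ → ℝ` on all of `ℝⁿ`. -/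
def IsWeakGrad (u : En n → ℝ) (g : En n → (En n →L[ℝ] ℝ)) : Prop :=
  ∀ φ : En n → ℝ, ContDiff ℝ 1 φ → HasCompactSupport φ →
    ∀ v : En n, ∫ x, u x * fderiv ℝ φ x v = - ∫ x, φ x * g x v

/-- The Sobolev 1-capacity: infimum of `W^{1,1}` norms of functions `u ≥ 1` on a
neighborhood of `A`. -/
def cap1 (A : Set (En n)) : ℝ≥0∞ :=
  sInf { c : ℝ≥0∞ | ∃ u : En n → ℝ, ∃ g : En n → (En n →L[ℝ] ℝ),
    Integrable u ∧ Integrable (fun x => ‖g x‖) ∧ IsWeakGrad u g ∧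
    (∃ V : Set (En n), IsOpen V ∧ A ⊆ V ∧ ∀ x ∈ V, 1 ≤ u x) ∧
    c = ENNReal.ofReal ((∫ x, |u x|) + ∫ x, ‖g x‖) }

/-- A set `U ⊆ ℝⁿ` is 1-finely open. -/
def FinelyOpen1 (U : Set (En n)) : Prop :=
  ∀ x ∈ U, Tendsto (fun r : ℝ => cap1 (Uᶜ ∩ ball x r) / ENNReal.ofReal (r ^ (n - 1)))
    (𝓝[>] 0) (𝓝 0)

/-- The relaxed quasiconformality quotient `K_{f,U}(x,r)`. -/
def KfU (f : En n → En n) (U : Set (En n)) (x : En n) (r : ℝ) : ℝ≥0∞ :=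
  if volume (f '' ball x r) = 0 then ∞
  else (EMetric.diam (f '' (ball x r ∩ U)) ^ n / volume (f '' ball x r)) ^ (((n : ℝ) - 1)⁻¹)

/-- Fine quasiconformal dilatation `K_f^fine(x)`. -/
def Kfine (f : En n → En n) (x : En n) : ℝ≥0∞ :=
  ⨅ (U : Set (En n)) (_ : FinelyOpen1 U) (_ : x ∈ U),
    Filter.limsup (fun r => KfU f U x r) (𝓝[>] 0)

/-- Metric quasiconformal dilatation `K_f(x)`. -/
def Kmetric (f : En n → En n) (x : En n) : ℝ≥0∞ :=
  Filter.limsup (fun r => KfU f univ x r) (𝓝[>] 0)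

/-- Volume derivative (Jacobian) `J_f(x)`. -/
def Jvol (f : En n → En n) (x : En n) : ℝ≥0∞ :=
  Filter.limsup (fun r => volume (f '' ball x r) / volume (ball x r)) (𝓝[>] 0)

/-- `g` is the weak gradient of the mapping `f : ℝⁿ → ℝⁿ` on the open set `Ω`. -/
def HasWeakGradOn (f : En n → En n) (g : En n → (En n →L[ℝ] En n)) (Ω : Set (En n)) : Prop :=
  ∀ φ : En n → ℝ, ContDiff ℝ 1 φ → HasCompactSupport φ → tsupport φ ⊆ Ω →
    ∀ v : En n, ∫ x in Ω, (fderiv ℝ φ x v) • f x = - ∫ x in Ω, φ x • g x v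

/-- The precise representative `f*` (componentwise limsup of ball averages). -/
def precise (f : En n → En n) (x : En n) : En n :=
  (EuclideanSpace.equiv (Fin n) ℝ).symm
    (fun i => Filter.limsup (fun r => ⨍ y in ball x r, f y i) (𝓝[>] 0))

/-- Centered Hardy–Littlewood maximal function of `u : ℝⁿ → ℝ`. -/
def maxFn (u : En n → ℝ) (x : En n) : ℝ≥0∞ :=
  ⨆ (r : ℝ) (_ : 0 < r), (volume (ball x r))⁻¹ * ∫⁻ y in ball x r, ‖u y‖₊

/-- Centered Hardy–Littlewood maximal function of `ρ : ℝⁿ → ℝ≥0∞`. -/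
def maxFn' (ρ : En n → ℝ≥0∞) (x : En n) : ℝ≥0∞ :=
  ⨆ (r : ℝ) (_ : 0 < r), (volume (ball x r))⁻¹ * ∫⁻ y in ball x r, ρ y

/-- Integrating the weak gradient identity over translates of a test function along a line. -/
lemma abs_integral_mul_sub_translate_le {u : En n → ℝ} {g : En n → (En n →L[ℝ] ℝ)}
    (hu : Integrable u) (hg : Integrable (fun x => ‖g x‖)) (h : IsWeakGrad u g)
    {ψ : En n → ℝ} (hψ : ContDiff ℝ 1 ψ) (hψc : HasCompactSupport ψ) (hψ0 : ∀ y, ψ y ∈ Icc 0 1)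
    {x : En n} {r : ℝ} (hr : 0 < r) (hsupp : ∀ y, y ∉ ball x r → ψ y = 0)
    {e : En n} (he : ‖e‖ = 1) {L : ℝ} (hL : 0 ≤ L) :
    |∫ y, u y * (ψ y - ψ (y - L • e))| ≤ 2 * r * ∫ y, ‖g y‖ := by
  have hcont : Continuous fun z : En n × ℝ => z.1 - z.2 • e := by fun_prop
  set ν : Measure ℝ := volume.restrict (Ioc 0 L) with hν
  have hdc : Continuous fun y => fderiv ℝ ψ y e := by
    have := hψ.continuous_fderiv (by norm_num)
    fun_prop
  obtain ⟨C, hC⟩ : ∃ C, ∀ y, ‖fderiv ℝ ψ y e‖ ≤ C := by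
    have hc : HasCompactSupport fun y => fderiv ℝ ψ y e := hψc.fderiv_apply (𝕜 := ℝ) e
    exact hdc.bounded_above_of_compact_support hc
  have key : ∀ s : ℝ, ∫ y, u y * fderiv ℝ ψ (y - s • e) e = -∫ y, ψ (y - s • e) * g y e := by
    intro s
    have h1 := h (fun y => ψ (y - s • e)) (hψ.comp (contDiff_id.sub contDiff_const))
      (hψc.comp_homeomorph (Homeomorph.subRight (s • e))) e
    rw [← h1]
    congr 1
    ext y
    simp only [sub_eq_add_neg, fderiv_comp_add_right]
  have ftc : ∀ y, ∫ s, fderiv ℝ ψ (y - s • e) e ∂ν = ψ y - ψ (y - L • e) := by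
    intro y
    have hd : ∀ s : ℝ, HasDerivAt (fun s : ℝ => -ψ (y - s • e)) (fderiv ℝ ψ (y - s • e) e) s := by
      intro s
      have h1 : HasDerivAt (fun s : ℝ => y - s • e) (-e) s := by
        simpa using ((hasDerivAt_id s).smul_const e).const_sub y
      have h2 : HasDerivAt (fun s : ℝ => -ψ (y - s • e)) (-fderiv ℝ ψ (y - s • e) (-e)) s :=
        ((hψ.differentiable (by norm_num) (y - s • e)).hasFDerivAt.comp_hasDerivAt s h1).neg
      simpa using h2
    have h3 := intervalIntegral.integral_eq_sub_of_hasDerivAt (a := 0) (b := L)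
      (fun s _ => hd s)
      ((hdc.comp (by fun_prop : Continuous fun s : ℝ => y - s • e)).intervalIntegrable _ _)
    rw [intervalIntegral.integral_of_le hL] at h3
    rw [hν, h3]
    simp
    ring
  have hi1 : Integrable (Function.uncurry fun (y : En n) (s : ℝ) =>
      u y * fderiv ℝ ψ (y - s • e) e) (volume.prod ν) := by
    refine Integrable.mul_bdd (c := C) (hu.comp_fst ν) ?_ ?_
    · exact (hdc.comp hcont).aestronglyMeasurable
    · exact Eventually.of_forall fun z => hC _
  have hi2 : Integrable (Function.uncurry fun (y : En n) (s : ℝ) =>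
      ‖g y‖ * ψ (y - s • e)) (volume.prod ν) := by
    refine Integrable.mul_bdd (c := 1) (hg.comp_fst ν) ?_ ?_
    · exact (hψ.continuous.comp hcont).aestronglyMeasurable
    · refine Eventually.of_forall fun z => ?_
      rw [Real.norm_eq_abs, abs_of_nonneg (hψ0 _).1]
      exact (hψ0 _).2
  have hline : ∀ y, ∫ s, ψ (y - s • e) ∂ν ≤ 2 * r := by
    intro y
    set c := inner ℝ (y - x) e
    have hle : ∀ s : ℝ, ψ (y - s • e) ≤ (Ioo (c - r) (c + r)).indicator (fun _ => (1 : ℝ)) s := by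
      intro s
      by_cases hs : y - s • e ∈ ball x r
      · have : s ∈ Ioo (c - r) (c + r) := by
          have h1 : |inner ℝ (y - s • e - x) e| < r := by
            refine (abs_real_inner_le_norm _ _).trans_lt ?_
            rw [he, mul_one]
            simpa [dist_eq_norm] using hs
          have h2 : inner ℝ (y - s • e - x) e = c - s := by
            rw [show y - s • e - x = (y - x) - s • e by abel, inner_sub_left, inner_smul_left,
              real_inner_self_eq_norm_sq, he]
            simp [c]
          rw [h2, abs_lt] at h1
          constructor <;> linarith [h1.1, h1.2]
        rw [indicator_of_mem this]
        exact (hψ0 _).2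
      · rw [hsupp _ hs]
        exact indicator_nonneg (fun _ _ => zero_le_one) _
    have hInt : Integrable ((Ioo (c - r) (c + r)).indicator (fun _ => (1 : ℝ))) :=
      (integrable_indicator_iff measurableSet_Ioo).2 (by simp)
    calc ∫ s, ψ (y - s • e) ∂ν
        ≤ ∫ s, (Ioo (c - r) (c + r)).indicator (fun _ => (1 : ℝ)) s ∂ν :=
          integral_mono_of_nonneg (Eventually.of_forall fun s => (hψ0 _).1)
            hInt.restrict (Eventually.of_forall hle)
      _ ≤ ∫ s, (Ioo (c - r) (c + r)).indicator (fun _ => (1 : ℝ)) s :=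
          integral_mono_measure Measure.restrict_le_self
            (Eventually.of_forall fun s => indicator_nonneg (fun _ _ => zero_le_one) _) hInt
      _ = 2 * r := by
          rw [integral_indicator measurableSet_Ioo]
          simp [Measure.real]
          rw [ENNReal.toReal_ofReal (by positivity), two_mul]
  have e1 : ∫ y, u y * (ψ y - ψ (y - L • e)) = ∫ s, (∫ y, u y * fderiv ℝ ψ (y - s • e) e) ∂ν := by
    rw [← integral_integral_swap hi1]
    congr 1
    ext y
    rw [integral_const_mul, ftc]
  rw [e1]
  calc |∫ s, (∫ y, u y * fderiv ℝ ψ (y - s • e) e) ∂ν|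
      ≤ ∫ s, (∫ y, ‖g y‖ * ψ (y - s • e)) ∂ν := by
        rw [← Real.norm_eq_abs]
        refine norm_integral_le_of_norm_le hi2.integral_prod_right (Eventually.of_forall fun s => ?_)
        rw [key s, norm_neg]
        refine norm_integral_le_of_norm_le ?_ (Eventually.of_forall fun y => ?_)
        · refine hg.mul_bdd (c := 1)
            (hψ.continuous.comp (by fun_prop)).aestronglyMeasurable (Eventually.of_forall fun z => ?_)
          rw [Real.norm_eq_abs, abs_of_nonneg (hψ0 _).1]
          exact (hψ0 _).2
        · rw [norm_mul, mul_comm, Real.norm_eq_abs (ψ _), abs_of_nonneg (hψ0 _).1]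
          gcongr
          · exact (hψ0 _).1
          · simpa [he] using (g y).le_opNorm e
    _ = ∫ y, (∫ s, ‖g y‖ * ψ (y - s • e) ∂ν) := (integral_integral_swap hi2).symm
    _ ≤ ∫ y, ‖g y‖ * (2 * r) := by
        refine integral_mono hi2.integral_prod_left (hg.mul_const _) fun y => ?_
        simp only [integral_const_mul]
        exact mul_le_mul_of_nonneg_left (hline y) (norm_nonneg _)
    _ = 2 * r * ∫ y, ‖g y‖ := by rw [integral_mul_const, mul_comm]

/-- A Poincaré-type inequality for integrable functions on the whole space. -/
lemma integral_mul_le_of_isWeakGrad (hn : 0 < n) {u : En n → ℝ} {g : En n → (En n →L[ℝ] ℝ)}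
    (hu : Integrable u) (hg : Integrable (fun x => ‖g x‖)) (h : IsWeakGrad u g)
    {ψ : En n → ℝ} (hψ : ContDiff ℝ 1 ψ) (hψc : HasCompactSupport ψ) (hψ0 : ∀ y, ψ y ∈ Icc 0 1)
    {x : En n} {r : ℝ} (hr : 0 < r) (hsupp : ∀ y, y ∉ ball x r → ψ y = 0) :
    ∫ y, u y * ψ y ≤ 2 * r * ∫ y, ‖g y‖ := by
  set e : En n := EuclideanSpace.single ⟨0, hn⟩ 1
  have he : ‖e‖ = 1 := by simp [e]
  have hb : ∀ y, ‖ψ y‖ ≤ 1 := fun y => by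
    rw [Real.norm_eq_abs, abs_of_nonneg (hψ0 _).1]
    exact (hψ0 _).2
  have hiL : ∀ L : ℝ, Integrable fun y => u y * ψ (y - L • e) := fun L =>
    hu.mul_bdd (c := 1) (hψ.continuous.comp (by fun_prop)).aestronglyMeasurable
      (Eventually.of_forall fun z => hb _)
  have hi : Integrable fun y => u y * ψ y := by simpa using hiL 0
  have hlim : Tendsto (fun L : ℝ => ∫ y, u y * ψ (y - L • e)) atTop (𝓝 (∫ _ : En n, (0 : ℝ))) := by
    refine tendsto_integral_filter_of_dominated_convergence (fun y => ‖u y‖)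
      (Eventually.of_forall fun L => (hiL L).aestronglyMeasurable)
      (Eventually.of_forall fun L => Eventually.of_forall fun y => ?_) hu.norm
      (Eventually.of_forall fun y => ?_)
    · rw [norm_mul]
      exact mul_le_of_le_one_right (norm_nonneg _) (hb _)
    · refine tendsto_const_nhds.congr' ?_
      filter_upwards [eventually_ge_atTop (r + ‖y - x‖)] with L hL
      rw [hsupp, mul_zero]
      intro hmem
      have h1 : ‖y - L • e - x‖ < r := by simpa [dist_eq_norm] using hmem
      have h2 : ‖(L • e : En n)‖ ≤ ‖y - x‖ + ‖y - L • e - x‖ := by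
        have h3 := norm_sub_le (y - x) (y - L • e - x)
        rwa [show (y - x) - (y - L • e - x) = L • e by abel] at h3
      rw [norm_smul, he, mul_one, Real.norm_eq_abs] at h2
      linarith [le_abs_self L]
  have hlim2 : Tendsto (fun L : ℝ => 2 * r * (∫ y, ‖g y‖) + ∫ y, u y * ψ (y - L • e)) atTop
      (𝓝 (2 * r * ∫ y, ‖g y‖)) := by
    simpa using hlim.const_add (2 * r * ∫ y, ‖g y‖)
  refine ge_of_tendsto hlim2 ?_
  filter_upwards [eventually_ge_atTop 0] with L hL
  have := abs_integral_mul_sub_translate_le hu hg h hψ hψc hψ0 hr hsupp he hL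
  simp only [mul_sub] at this
  rw [integral_sub hi (hiL L)] at this
  linarith [(abs_le.1 this).2]

/-- Inside a ball of radius `r`, the Lebesgue outer measure is at most `2 * r` times the
Sobolev 1-capacity. -/
lemma volume_le_cap1 (hn : 0 < n) {A : Set (En n)} {x : En n} {r : ℝ} (hr : 0 < r)
    (hA : A ⊆ ball x r) : volume A ≤ ENNReal.ofReal (2 * r) * cap1 A := by
  have h0 : ENNReal.ofReal (2 * r) ≠ 0 := by simpa using hr
  rw [mul_comm, ← ENNReal.div_le_iff h0 ENNReal.ofReal_ne_top]
  refine le_sInf ?_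
  rintro c ⟨u, g, hu, hg, h, ⟨V, hVo, hAV, hV⟩, rfl⟩
  rw [ENNReal.div_le_iff h0 ENNReal.ofReal_ne_top]
  have hWo : IsOpen (V ∩ ball x r) := hVo.inter isOpen_ball
  refine (measure_mono (subset_inter hAV hA)).trans ?_
  rw [hWo.measure_eq_iSup_isCompact]
  refine iSup_le fun κ => iSup_le fun hκW => iSup_le fun hκ => ?_
  obtain ⟨ψ, hψ0, hψ1, hψI⟩ := exists_contMDiffMap_zero_one_of_isClosed (n := 1) (modelWithCornersSelf ℝ (En n))
    hWo.isClosed_compl hκ.isClosed (disjoint_left.2 fun y hy hy' => hy (hκW hy'))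
  have hψd : ContDiff ℝ 1 ψ := ψ.contMDiff.contDiff
  have hsupp : ∀ y, y ∉ ball x r → ψ y = 0 := fun y hy => hψ0 fun h => hy h.2
  have hψc : HasCompactSupport ψ :=
    HasCompactSupport.intro (isCompact_closedBall x r) fun y hy =>
      hsupp y fun h => hy (ball_subset_closedBall h)
  have hle := integral_mul_le_of_isWeakGrad hn hu hg h hψd hψc hψI hr hsupp
  have hfin : volume κ ≠ ∞ := hκ.measure_lt_top.ne
  have h1 : (volume κ).toReal ≤ ∫ y, u y * ψ y := by
    have : ∫ y, κ.indicator (fun _ => (1 : ℝ)) y = (volume κ).toReal := by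
      rw [integral_indicator hκ.measurableSet]
      simp [Measure.real]
    rw [← this]
    refine integral_mono ((integrable_indicator_iff hκ.measurableSet).2 (by simpa using hfin.lt_top))
      (hu.mul_bdd (c := 1) hψd.continuous.aestronglyMeasurable
        (Eventually.of_forall fun y => ?_)) fun y => ?_
    · rw [Real.norm_eq_abs, abs_of_nonneg (hψI _).1]
      exact (hψI _).2
    · by_cases hy : y ∈ κ
      · rw [indicator_of_mem hy, hψ1 hy]
        simpa using hV y (hκW hy).1
      · rw [indicator_of_notMem hy]
        by_cases hyV : y ∈ V
        · exact mul_nonneg (zero_le_one.trans (hV y hyV)) (hψI _).1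
        · simp [hψ0 (show y ∈ (V ∩ ball x r)ᶜ from fun h => hyV h.1)]
  rw [← ENNReal.ofReal_toReal hfin, ← ENNReal.ofReal_mul (by positivity)]
  refine ENNReal.ofReal_le_ofReal (h1.trans (hle.trans ?_))
  have : 0 ≤ ∫ y, |u y| := integral_nonneg fun _ => abs_nonneg _
  nlinarith

/-- `f` restricted to each of the sets `G k` is controlled, at all scales below `1 / (k + 1)`,
by the volume of the images of balls. -/
def VolumeControl (f : En n → En n) (C : ℝ≥0∞) (G : ℕ → Set (En n)) : Prop :=
  ∀ k, ∀ x ∈ G k, ∀ y ∈ G k, ∀ r : ℝ, dist x y < r → r < 1 / (k + 1) →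
    edist (f x) (f y) ^ n ≤ C * volume (f '' ball x (2 * r))

lemma volume_ball_eq_mul (x y : En n) {c : ℝ} (hc : 0 < c) (r : ℝ) :
    volume (ball x (c * r)) = ENNReal.ofReal c ^ n * volume (ball y r) := by
  rw [Measure.addHaar_ball_mul_of_pos volume x hc, ← ENNReal.ofReal_pow hc.le,
    Measure.addHaar_ball_center volume y]
  simp

lemma eventually_volume_compl_lt (hn : 0 < n) {U : Set (En n)} (hU : FinelyOpen1 U) {x : En n}
    (hx : x ∈ U) {θ : ℝ≥0∞} (hθ : θ ≠ 0) :
    ∀ᶠ r in 𝓝[>] (0 : ℝ), volume (Uᶜ ∩ ball x r) < θ * volume (ball x r) := by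
  set ω : ℝ≥0∞ := volume (ball (0 : En n) 1)
  have hω : ω ≠ 0 := (measure_ball_pos volume _ one_pos).ne'
  have hpos : 0 < θ * ω / 2 := ENNReal.div_pos (mul_ne_zero hθ hω) (by simp)
  filter_upwards [(hU x hx).eventually_lt_const hpos, self_mem_nhdsWithin] with r hr hr0
  have hr0 : 0 < r := hr0
  have hp : ENNReal.ofReal (r ^ (n - 1)) ≠ 0 := by
    rw [ne_eq, ENNReal.ofReal_eq_zero, not_le]; positivity
  rw [ENNReal.div_lt_iff (Or.inl hp) (Or.inl ENNReal.ofReal_ne_top)] at hr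
  calc volume (Uᶜ ∩ ball x r) ≤ ENNReal.ofReal (2 * r) * cap1 (Uᶜ ∩ ball x r) :=
        volume_le_cap1 hn hr0 inter_subset_right
    _ < ENNReal.ofReal (2 * r) * (θ * ω / 2 * ENNReal.ofReal (r ^ (n - 1))) :=
        ENNReal.mul_lt_mul_right (by simpa using hr0) ENNReal.ofReal_ne_top hr
    _ = θ * volume (ball x r) := by
        have h1 : volume (ball x r) = ENNReal.ofReal r ^ n * ω := by
          simpa using volume_ball_eq_mul x 0 hr0 1
        rw [h1, ENNReal.ofReal_mul zero_le_two, ENNReal.ofReal_pow hr0.le,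
          ENNReal.ofReal_ofNat, div_eq_mul_inv]
        obtain ⟨m, rfl⟩ := Nat.exists_eq_succ_of_ne_zero hn.ne'
        simp only [Nat.succ_eq_add_one, Nat.add_sub_cancel]
        calc 2 * ENNReal.ofReal r * (θ * ω * 2⁻¹ * ENNReal.ofReal r ^ m)
            = (2 * 2⁻¹) * (θ * (ENNReal.ofReal r ^ (m + 1) * ω)) := by ring
          _ = _ := by rw [ENNReal.mul_inv_cancel two_ne_zero ofNat_ne_top, one_mul]

lemma IsHomeomorph.volume_image_ball_lt_top {f : En n → En n} (hf : IsHomeomorph f) (x : En n)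
    (r : ℝ) : volume (f '' ball x r) < ∞ :=
  (measure_mono (image_mono ball_subset_closedBall)).trans_lt
    ((isCompact_closedBall x r).image hf.continuous).measure_lt_top

lemma eventually_ediam_pow_le (hn : 2 ≤ n) {f : En n → En n} (hf : IsHomeomorph f)
    {U : Set (En n)} {x : En n} {L : ℝ≥0∞}
    (h : limsup (fun r => KfU f U x r) (𝓝[>] 0) < L) :
    ∀ᶠ r in 𝓝[>] (0 : ℝ),
      ediam (f '' (ball x r ∩ U)) ^ n ≤ L ^ ((n : ℝ) - 1) * volume (f '' ball x r) := by
  filter_upwards [eventually_lt_of_limsup_lt h] with r hr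
  unfold KfU at hr
  split_ifs at hr with h0
  · exact absurd hr not_top_lt
  · have hn1 : 0 < (n : ℝ) - 1 := by
      have : (2 : ℝ) ≤ n := by exact_mod_cast hn
      linarith
    have := ENNReal.rpow_le_rpow hr.le hn1.le
    rw [← ENNReal.rpow_mul, inv_mul_cancel₀ hn1.ne', ENNReal.rpow_one] at this
    exact (ENNReal.div_le_iff h0 (hf.volume_image_ball_lt_top x r).ne).1 this

/-- A finely quasiconformal homeomorphism admits a countable family of sets with volume control
that covers the space. -/
lemma exists_volumeControl (hn : 2 ≤ n) {f : En n → En n} (hf : IsHomeomorph f)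
    (K : ℝ) (hK : ∀ x, Kfine f x ≤ ENNReal.ofReal K) :
    ∃ (C : ℝ≥0∞) (G : ℕ → Set (En n)), C ≠ ∞ ∧ ⋃ k, G k = univ ∧ VolumeControl f C G := by
  set L : ℝ≥0∞ := ENNReal.ofReal K + 1
  set Q : ℝ≥0∞ := L ^ ((n : ℝ) - 1)
  set θ : ℝ≥0∞ := (2 ^ (n + 1))⁻¹
  have hθ : θ ≠ 0 := by simp [θ]
  have hQ : Q ≠ ∞ := by
    refine ENNReal.rpow_ne_top_of_nonneg ?_ (by simp [L])
    have : (2 : ℝ) ≤ n := by exact_mod_cast hn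
    linarith
  refine ⟨2 ^ n * Q, fun k => {x | ∃ U : Set (En n), x ∈ U ∧ ∀ r : ℝ, 0 < r → r < 2 / (k + 1) →
    volume (Uᶜ ∩ ball x r) < θ * volume (ball x r) ∧
      ediam (f '' (ball x r ∩ U)) ^ n ≤ Q * volume (f '' ball x r)},
    ENNReal.mul_ne_top (by simp) hQ, ?_, ?_⟩
  · refine eq_univ_of_forall fun x => mem_iUnion.2 ?_
    have hlt : Kfine f x < L := (hK x).trans_lt (ENNReal.lt_add_right ENNReal.ofReal_ne_top one_ne_zero)
    simp only [Kfine, iInf_lt_iff] at hlt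
    obtain ⟨U, hU, hxU, hlim⟩ := hlt
    have hev := (eventually_volume_compl_lt (by omega) hU hxU hθ).and
      (eventually_ediam_pow_le hn hf hlim)
    obtain ⟨δ, hδ, hδ'⟩ := mem_nhdsGT_iff_exists_Ioo_subset.1 hev
    have hδ : 0 < δ := hδ
    obtain ⟨k, hk⟩ := exists_nat_one_div_lt (half_pos hδ)
    refine ⟨k, U, hxU, fun r hr0 hr => hδ' ⟨hr0, hr.trans ?_⟩⟩
    calc (2 : ℝ) / (k + 1) = 2 * (1 / (k + 1)) := by ring
      _ < δ := by linarith
  · rintro k x ⟨U, hxU, hU⟩ y ⟨W, hyW, hW⟩ r hxy hr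
    have hr0 : 0 < r := dist_nonneg.trans_lt hxy
    have h2r : 2 * r < 2 / (k + 1) := by
      calc 2 * r < 2 * (1 / (k + 1)) := by linarith
        _ = 2 / (k + 1) := by ring
    obtain ⟨hU1, hU2⟩ := hU (2 * r) (by linarith) h2r
    obtain ⟨hW1, hW2⟩ := hW r hr0 (by linarith)
    have hsub : ball y r ⊆ ball x (2 * r) := ball_subset_ball' (by rw [dist_comm]; linarith)
    obtain ⟨z, hzy, hzU, hzW⟩ : ∃ z ∈ ball y r, z ∈ U ∧ z ∈ W := by
      by_contra! hcon
      have hcov : ball y r ⊆ (Wᶜ ∩ ball y r) ∪ (Uᶜ ∩ ball x (2 * r)) := fun z hz => by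
        by_cases hzU : z ∈ U
        · exact Or.inl ⟨hcon z hz hzU, hz⟩
        · exact Or.inr ⟨hzU, hsub hz⟩
      have hvol : volume (ball x (2 * r)) = 2 ^ n * volume (ball y r) := by
        simpa using volume_ball_eq_mul x y two_pos r
      have hlt : volume (ball y r) < volume (ball y r) :=
        calc volume (ball y r) ≤ volume (Wᶜ ∩ ball y r) + volume (Uᶜ ∩ ball x (2 * r)) :=
              (measure_mono hcov).trans (measure_union_le _ _)
          _ < θ * volume (ball y r) + θ * volume (ball x (2 * r)) := ENNReal.add_lt_add hW1 hU1
          _ = (θ * (1 + 2 ^ n)) * volume (ball y r) := by rw [hvol]; ring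
          _ ≤ 1 * volume (ball y r) := by
              gcongr
              calc θ * (1 + 2 ^ n) ≤ θ * (2 ^ n + 2 ^ n) := by
                    gcongr
                    exact one_le_pow₀ one_le_two
                _ = θ * 2 ^ (n + 1) := by rw [pow_succ]; ring
                _ = 1 := ENNReal.inv_mul_cancel (by simp) (by simp)
          _ = volume (ball y r) := one_mul _
      exact lt_irrefl _ hlt
    have hWle : ediam (f '' (ball y r ∩ W)) ^ n ≤ Q * volume (f '' ball x (2 * r)) :=
      hW2.trans (mul_le_mul_right (measure_mono (image_mono hsub)) _)
    have h1 : edist (f x) (f z) ≤ ediam (f '' (ball x (2 * r) ∩ U)) :=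
      edist_le_ediam_of_mem (mem_image_of_mem f ⟨mem_ball_self (by linarith), hxU⟩)
        (mem_image_of_mem f ⟨hsub hzy, hzU⟩)
    have h2 : edist (f z) (f y) ≤ ediam (f '' (ball y r ∩ W)) :=
      edist_le_ediam_of_mem (mem_image_of_mem f ⟨hzy, hzW⟩)
        (mem_image_of_mem f ⟨mem_ball_self hr0, hyW⟩)
    set a := ediam (f '' (ball x (2 * r) ∩ U))
    set b := ediam (f '' (ball y r ∩ W))
    calc edist (f x) (f y) ^ n ≤ (2 * max a b) ^ n := by
          gcongr
          refine (edist_triangle _ (f z) _).trans ((add_le_add h1 h2).trans ?_)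
          rw [two_mul]
          exact add_le_add (le_max_left _ _) (le_max_right _ _)
      _ = 2 ^ n * max a b ^ n := mul_pow _ _ _
      _ ≤ 2 ^ n * (Q * volume (f '' ball x (2 * r))) := by
          gcongr
          rcases max_choice a b with h | h <;> rw [h] <;> assumption
      _ = _ := by ring

/-- The pullback of Lebesgue measure under `f`, `E ↦ |f(E)|`. -/
def pullbackVolume (f : En n → En n) : Measure (En n) := volume.comap f

lemma IsHomeomorph.pullbackVolume_apply {f : En n → En n} (hf : IsHomeomorph f) (s : Set (En n)) :
    pullbackVolume f s = volume (f '' s) :=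
  hf.isClosedEmbedding.measurableEmbedding.comap_apply _ _

lemma IsHomeomorph.isLocallyFiniteMeasure_pullbackVolume {f : En n → En n} (hf : IsHomeomorph f) :
    IsLocallyFiniteMeasure (pullbackVolume f) :=
  ⟨fun x => ⟨ball x 1, ball_mem_nhds x one_pos, by
    rw [hf.pullbackVolume_apply]
    exact hf.volume_image_ball_lt_top x 1⟩⟩

/-- The density of the pullback of Lebesgue measure under `f`. -/
def volumeDensity (f : En n → En n) : En n → ℝ≥0∞ := (pullbackVolume f).rnDeriv volume

lemma measurable_volumeDensity (f : En n → En n) : Measurable (volumeDensity f) :=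
  Measure.measurable_rnDeriv _ _

lemma IsHomeomorph.ae_volumeDensity_lt_top {f : En n → En n} (hf : IsHomeomorph f) :
    ∀ᵐ x, volumeDensity f x < ∞ := by
  have := hf.isLocallyFiniteMeasure_pullbackVolume
  exact Measure.rnDeriv_lt_top _ _

/-- Volume control gives a Lipschitz bound on small sets where the measure of balls is controlled. -/
lemma VolumeControl.lipschitzOnWith {f : En n → En n} (hn : n ≠ 0) (hf : IsHomeomorph f)
    {C : ℝ≥0∞} {G : ℕ → Set (En n)} (hG : VolumeControl f C G) {k l : ℕ} {a : ℝ≥0∞} {A : Set (En n)}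
    {c : ℝ≥0} (hc : (c : ℝ≥0∞) ^ n = C * (4 ^ n * volume (ball (0 : En n) 1)) * a)
    (hAG : A ⊆ G k)
    (hA : ∀ x ∈ A, ∀ r : ℝ, 0 < r → r < 1 / (l + 1) →
      pullbackVolume f (closedBall x r) ≤ a * volume (closedBall x r))
    (hk : ∀ x ∈ A, ∀ y ∈ A, 2 * dist x y < 1 / (k + 1))
    (hl : ∀ x ∈ A, ∀ y ∈ A, 4 * dist x y < 1 / (l + 1)) :
    LipschitzOnWith c f A := by
  intro x hx y hy
  rcases eq_or_ne x y with rfl | hxy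
  · simp
  have hd : 0 < dist x y := dist_pos.2 hxy
  have h1 := hG k x (hAG hx) y (hAG hy) (2 * dist x y) (by linarith) (hk x hx y hy)
  rw [← ENNReal.pow_le_pow_left_iff hn, mul_pow, hc]
  calc edist (f x) (f y) ^ n ≤ C * pullbackVolume f (closedBall x (4 * dist x y)) := by
        refine h1.trans ?_
        rw [hf.pullbackVolume_apply]
        gcongr
        rw [show 2 * (2 * dist x y) = 4 * dist x y by ring]
        exact ball_subset_closedBall
    _ ≤ C * (a * volume (closedBall x (4 * dist x y))) := by
        gcongr
        exact hA x hx _ (by linarith) (hl x hx y hy)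
    _ = _ := by
        rw [Measure.addHaar_closedBall volume x (by linarith), finrank_euclideanSpace_fin,
          ENNReal.ofReal_pow (by linarith), ENNReal.ofReal_mul (by norm_num), edist_dist, mul_pow,
          ENNReal.ofReal_ofNat]
        ring

/-- Almost all of space is a countable disjoint union of measurable sets on which `f` is Lipschitz,
with constants bounded by the volume density. -/
lemma VolumeControl.exists_lipschitz_decomposition {f : En n → En n} (hn : n ≠ 0)
    (hf : IsHomeomorph f) {C : ℝ≥0∞} (hC : C ≠ ∞) {G : ℕ → Set (En n)} (hGU : ⋃ k, G k = univ)
    (hG : VolumeControl f C G) {ε : ℝ≥0∞} (hε : ε ≠ 0) (hε' : ε ≠ ∞) :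
    ∃ (B : ℕ → Set (En n)) (c : ℕ → ℝ≥0), (∀ j, MeasurableSet (B j)) ∧
      Pairwise (Function.onFun Disjoint B) ∧ volume (⋃ j, B j)ᶜ = 0 ∧
      (∀ j, LipschitzOnWith (c j) f (B j)) ∧
      ∀ j, ∀ x ∈ B j, (c j : ℝ≥0∞) ^ n ≤
        C * (4 ^ n * volume (ball (0 : En n) 1)) * (volumeDensity f x + ε) := by
  have := hf.isLocallyFiniteMeasure_pullbackVolume
  set C' : ℝ≥0∞ := C * (4 ^ n * volume (ball (0 : En n) 1))
  have hC' : C' ≠ ∞ := ENNReal.mul_ne_top hC (ENNReal.mul_ne_top (by simp) measure_ball_lt_top.ne)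
  let a : ℕ → ℝ≥0∞ := fun i => (i + 1) * ε
  have ha : ∀ i, C' * a i ≠ ∞ := fun i =>
    ENNReal.mul_ne_top hC' (ENNReal.mul_ne_top (by simp) hε')
  let D : ℕ → Set (En n) := fun i => {x | volumeDensity f x < a i ∧ a i ≤ volumeDensity f x + ε}
  have hD : ∀ i, MeasurableSet (D i) := fun i =>
    (measurableSet_lt (measurable_volumeDensity f) measurable_const).inter
      (measurableSet_le measurable_const ((measurable_volumeDensity f).add_const ε))
  let A : ℕ × ℕ × ℕ × ℕ → Set (En n) := fun p =>
    {x | x ∈ G p.1 ∧ ∀ r : ℝ, 0 < r → r < 1 / (p.2.1 + 1) →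
      pullbackVolume f (closedBall x r) ≤ a p.2.2.1 * volume (closedBall x r)} ∩
    ball (TopologicalSpace.denseSeq (En n) p.2.2.2) (1 / (8 * (p.1 + 1) * (p.2.1 + 1)))
  let c' : ℕ × ℕ × ℕ × ℕ → ℝ≥0 := fun p => ((C' * a p.2.2.1) ^ ((n : ℝ)⁻¹)).toNNReal
  have hc' : ∀ p, (c' p : ℝ≥0∞) ^ n = C' * a p.2.2.1 := fun p => by
    rw [ENNReal.coe_toNNReal (ENNReal.rpow_ne_top_of_nonneg (by positivity) (ha _)),
      ← ENNReal.rpow_natCast, ← ENNReal.rpow_mul, inv_mul_cancel₀ (by exact_mod_cast hn),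
      ENNReal.rpow_one]
  have hdist : ∀ p, ∀ x ∈ A p, ∀ y ∈ A p, 4 * dist x y < 1 / ((p.1 + 1) * (p.2.1 + 1)) := by
    rintro p x ⟨-, hx⟩ y ⟨-, hy⟩
    have h1 := dist_triangle_right x y (TopologicalSpace.denseSeq (En n) p.2.2.2)
    rw [mem_ball] at hx hy
    have h2 : (1 : ℝ) / ((p.1 + 1) * (p.2.1 + 1)) = 8 * (1 / (8 * (p.1 + 1) * (p.2.1 + 1))) := by
      field_simp
    rw [h2]
    linarith
  have hle1 : ∀ p q : ℕ, (1 : ℝ) / ((p + 1) * (q + 1)) ≤ 1 / (p + 1) := fun p q => by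
    gcongr
    exact le_mul_of_one_le_right (by positivity) (by linarith [(Nat.cast_nonneg q : (0 : ℝ) ≤ q)])
  have hle2 : ∀ p q : ℕ, (1 : ℝ) / ((p + 1) * (q + 1)) ≤ 1 / (q + 1) := fun p q => by
    rw [mul_comm]
    exact hle1 q p
  have hlip : ∀ p, LipschitzOnWith (c' p) f (A p) := fun p =>
    hG.lipschitzOnWith hn hf (hc' p) (fun x hx => hx.1.1) (fun x hx => hx.1.2)
      (fun x hx y hy => by
        linarith [hdist p x hx y hy, hle1 p.1 p.2.1, (dist_nonneg : 0 ≤ dist x y)])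
      (fun x hx y hy => (hdist p x hx y hy).trans_le (hle2 _ _))
  let e : ℕ ≃ ℕ × ℕ × ℕ × ℕ := (Denumerable.eqv (ℕ × ℕ × ℕ × ℕ)).symm
  let B₀ : ℕ → Set (En n) := fun j => closure (A (e j)) ∩ D (e j).2.2.1
  refine ⟨disjointed B₀, fun j => c' (e j), fun j => MeasurableSet.disjointed (fun i =>
    isClosed_closure.measurableSet.inter (hD _)) j, disjoint_disjointed B₀, ?_, fun j => ?_, ?_⟩
  · rw [iUnion_disjointed]
    have hae : ∀ᵐ x, x ∈ ⋃ j, B₀ j := by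
      filter_upwards [hf.ae_volumeDensity_lt_top,
        Besicovitch.ae_tendsto_rnDeriv (pullbackVolume f) volume] with x hx hlim
      obtain ⟨k, hk⟩ := mem_iUnion.1 (hGU ▸ mem_univ x)
      have hex : ∃ i, volumeDensity f x < a i := by
        obtain ⟨m, hm⟩ := ENNReal.exists_nat_mul_gt hε hx.ne
        exact ⟨m, hm.trans_le (by simp only [a]; gcongr; exact le_self_add)⟩
      classical
      have hi1 := Nat.find_spec hex
      have hi2 : a (Nat.find hex) ≤ volumeDensity f x + ε := by
        rcases h : Nat.find hex with _ | j
        · simp [a]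
        · have := Nat.find_min hex (m := j) (by omega)
          rw [not_lt] at this
          calc a (j + 1) = a j + ε := by simp only [a]; push_cast; ring
            _ ≤ _ := by gcongr
      set i := Nat.find hex
      have hev := hlim.eventually_lt_const hi1
      obtain ⟨δ, hδ, hδ'⟩ := mem_nhdsGT_iff_exists_Ioo_subset.1 hev
      obtain ⟨l, hl⟩ := exists_nat_one_div_lt (show (0 : ℝ) < δ from hδ)
      obtain ⟨q, hq⟩ := (TopologicalSpace.denseRange_denseSeq (En n)).exists_dist_lt x
        (show (0 : ℝ) < 1 / (8 * (k + 1) * (l + 1)) by positivity)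
      refine mem_iUnion.2 ⟨e.symm (k, l, i, q), ?_⟩
      simp only [B₀, Equiv.apply_symm_apply]
      refine ⟨subset_closure ⟨⟨hk, fun r hr0 hr => ?_⟩, hq⟩, hi1, hi2⟩
      have := hδ' ⟨hr0, hr.trans hl⟩
      exact (ENNReal.div_le_iff (measure_closedBall_pos volume x hr0).ne'
        measure_closedBall_lt_top.ne).1 this.le
    exact hae
  · exact ((hlip (e j)).closure hf.continuous.continuousOn).mono
      ((disjointed_subset B₀ j).trans inter_subset_left)
  · intro j x hx
    rw [hc']
    gcongr
    exact (disjointed_subset B₀ j hx).2.2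

lemma volume_closedBall_eq (x : En n) {r : ℝ} (hr : 0 ≤ r) :
    volume (closedBall x r) = ENNReal.ofReal r ^ n * volume (ball (0 : En n) 1) := by
  rw [Measure.addHaar_closedBall volume x hr, finrank_euclideanSpace_fin, ENNReal.ofReal_pow hr]

/-- A locally finite measure above Lebesgue measure is doubling around any point at arbitrarily
small scales. -/
lemma exists_doubling_scale (μ : Measure (En n)) [IsLocallyFiniteMeasure μ] (hμ : volume ≤ μ) (x : En n) {δ : ℝ}
    (hδ : 0 < δ) :
    ∃ r : ℝ, 0 < r ∧ r < δ ∧ μ (closedBall x (12 * r)) ≤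
      2 * 12 ^ n * μ (closedBall x r) := by
  by_contra! H
  have hstep : ∀ m : ℕ, (2 * 12 ^ n) ^ m * μ (closedBall x (δ / 2 / 12 ^ m)) ≤
      μ (closedBall x (δ / 2)) := by
    intro m
    induction m with
    | zero => simp
    | succ m ih =>
      refine le_trans ?_ ih
      have h1 : δ / 2 / 12 ^ (m + 1) < δ :=
        (div_le_self (by positivity) (one_le_pow₀ (by norm_num))).trans_lt (by linarith)
      have := (H (δ / 2 / 12 ^ (m + 1)) (by positivity) h1).le
      rw [show 12 * (δ / 2 / 12 ^ (m + 1)) = δ / 2 / 12 ^ m by field_simp; ring] at this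
      rw [pow_succ, mul_assoc]
      gcongr
  have hfin : μ (closedBall x (δ / 2)) < ∞ := measure_closedBall_lt_top
  have hpos : 0 < volume (closedBall x (δ / 2)) := measure_closedBall_pos volume x (by positivity)
  obtain ⟨m, hm⟩ := ENNReal.exists_nat_mul_gt hpos.ne' hfin.ne
  have h2 : (2 : ℝ≥0∞) ^ m * volume (closedBall x (δ / 2)) ≤ μ (closedBall x (δ / 2)) := by
    refine le_trans ?_ (hstep m)
    calc (2 : ℝ≥0∞) ^ m * volume (closedBall x (δ / 2))
        = (2 * 12 ^ n) ^ m * volume (closedBall x (δ / 2 / 12 ^ m)) := by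
          rw [volume_closedBall_eq x (by positivity), volume_closedBall_eq x (by positivity),
            ENNReal.ofReal_div_of_pos (y := 12 ^ m) (by positivity), ENNReal.ofReal_pow (by norm_num),
            ENNReal.ofReal_ofNat, mul_pow 2, mul_assoc, ← mul_assoc (((12 : ℝ≥0∞) ^ n) ^ m)]
          congr 2
          rw [← pow_mul, mul_comm n m, pow_mul, ← mul_pow, ENNReal.mul_div_cancel (by simp) (by simp)]
      _ ≤ _ := by
          gcongr
  refine absurd (hm.trans_le (le_trans ?_ h2)) (lt_irrefl _)
  gcongr
  exact_mod_cast Nat.lt_two_pow_self.le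

/-- The volume of a box with one long side. -/
lemma volume_box (i : Fin n) (R s : ℝ) (c : En n) :
    MeasurableSet {x : En n | |x i| ≤ R ∧ ∀ l, l ≠ i → |x l - c l| ≤ s} ∧
    volume {x : En n | |x i| ≤ R ∧ ∀ l, l ≠ i → |x l - c l| ≤ s} =
      ENNReal.ofReal (2 * R) * ENNReal.ofReal (2 * s) ^ (n - 1) := by
  classical
  let B : Fin n → Set ℝ := fun l => if l = i then Icc (-R) R else Icc (c l - s) (c l + s)
  have hB : MeasurableSet (univ.pi B) := MeasurableSet.univ_pi fun l => by
    simp only [B]; split_ifs <;> exact measurableSet_Icc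
  have hmp := EuclideanSpace.volume_preserving_symm_measurableEquiv_toLp (Fin n)
  have hpre : {x : En n | |x i| ≤ R ∧ ∀ l, l ≠ i → |x l - c l| ≤ s} =
      (MeasurableEquiv.toLp 2 (Fin n → ℝ)).symm ⁻¹' (univ.pi B) := by
    ext x
    simp only [mem_ofPred_eq, mem_preimage, mem_univ_pi, B]
    constructor
    · rintro ⟨h1, h2⟩ l
      split_ifs with h
      · subst h; exact abs_le.1 h1
      · have := abs_le.1 (h2 l h)
        exact ⟨by linarith [this.1, show (MeasurableEquiv.toLp 2 (Fin n → ℝ)).symm x l = x l from rfl],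
          by linarith [this.2, show (MeasurableEquiv.toLp 2 (Fin n → ℝ)).symm x l = x l from rfl]⟩
    · intro h
      refine ⟨?_, fun l hl => ?_⟩
      · have := h i
        rw [if_pos rfl] at this
        exact abs_le.2 this
      · have := h l
        rw [if_neg hl] at this
        have h3 : (MeasurableEquiv.toLp 2 (Fin n → ℝ)).symm x l = x l := rfl
        rw [h3] at this
        exact abs_le.2 ⟨by linarith [this.1], by linarith [this.2]⟩
  rw [hpre]
  refine ⟨hmp.measurable hB, ?_⟩
  rw [hmp.measure_preimage hB.nullMeasurableSet, volume_pi_pi,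
    ← Finset.mul_prod_erase _ _ (Finset.mem_univ i)]
  simp only [B, if_true]
  rw [Real.volume_Icc, Finset.prod_congr rfl (g := fun _ => ENNReal.ofReal (2 * s)), Finset.prod_const,
    Finset.card_erase_of_mem (Finset.mem_univ i), Finset.card_univ, Fintype.card_fin]
  · congr 2; ring
  · intro l hl
    rw [if_neg (Finset.ne_of_mem_erase hl), Real.volume_Icc]
    congr 1; ring

/-- An elementary substitute for Young's inequality. -/
lemma mul_pow_pred_le (hn : 2 ≤ n) (d s : ℝ≥0∞) {τ : ℝ≥0∞} (hτ : 1 ≤ τ) (hτ' : τ ≠ ∞) :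
    d * s ^ (n - 1) ≤ τ * s ^ n + d ^ n / τ := by
  obtain ⟨m, rfl⟩ : ∃ m, n = m + 2 := ⟨n - 2, by omega⟩
  have hτ0 : τ ≠ 0 := (zero_lt_one.trans_le hτ).ne'
  rcases le_total d (τ * s) with h | h
  · refine le_add_right ?_
    calc d * s ^ (m + 2 - 1) ≤ τ * s * s ^ (m + 1) := mul_le_mul_left h _
      _ = τ * s ^ (m + 2) := by ring
  · refine le_add_left ?_
    have h' : s ≤ d / τ := by
      rw [ENNReal.le_div_iff_mul_le (Or.inl hτ0) (Or.inl hτ'), mul_comm]; exact h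
    calc d * s ^ (m + 2 - 1) = d * (s * s ^ m) := by
          rw [show m + 2 - 1 = m + 1 by omega]; ring
      _ ≤ d * (d / τ * d ^ m) := by
          gcongr
          exact h'.trans (ENNReal.div_le_of_le_mul (le_mul_of_one_le_right zero_le hτ))
      _ = d ^ (m + 2) / τ := by
          rw [div_eq_mul_inv, div_eq_mul_inv]; ring

/-- The images under `u` of the sections of a null set `E` along lines in a coordinate direction
are controlled by a function of small integral. -/
lemma exists_sections_le (hn : 2 ≤ n) (i : Fin n) {μ : Measure (En n)}
    [IsLocallyFiniteMeasure μ] (hμ : volume ≤ μ) {u : En n → ℝ} {C : ℝ≥0∞} {δ : ℝ} (hδ : 0 < δ)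
    {E : Set (En n)} (hE : volume E = 0) {R : ℝ} (hER : E ⊆ ball 0 R)
    (hu : ∀ x ∈ E, ∀ y ∈ E, ∀ r : ℝ, dist x y < r → r < δ →
      edist (u x) (u y) ^ n ≤ C * μ (closedBall x (2 * r)))
    {τ : ℝ≥0∞} (hτ : 1 ≤ τ) (hτ' : τ ≠ ∞) :
    ∃ S : En n → ℝ≥0∞, Measurable S ∧
      (∀ x, volume ((fun t : ℝ => u (x + t • EuclideanSpace.single i 1)) ''
        {t | x + t • EuclideanSpace.single i 1 ∈ E}) ≤ S x) ∧
      ∫⁻ x in {x | |x i| ≤ R}, S x ≤ 2 * ENNReal.ofReal (2 * R) *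
        (10 ^ n / volume (ball (0 : En n) 1) + C * (2 * 12 ^ n) * μ (ball 0 R)) / τ := by
  have hτ0 : τ ≠ 0 := (zero_lt_one.trans_le hτ).ne'
  set ω : ℝ≥0∞ := volume (ball (0 : En n) 1)
  have hω0 : ω ≠ 0 := (measure_ball_pos volume _ one_pos).ne'
  have hω : ω ≠ ∞ := measure_ball_lt_top.ne
  obtain ⟨O₁, hEO₁, hO₁, hvol⟩ := E.exists_isOpen_lt_of_lt (μ := volume) (τ * τ)⁻¹
    (by rw [hE]; exact ENNReal.inv_pos.2 (ENNReal.mul_ne_top hτ' hτ'))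
  set O := O₁ ∩ ball (0 : En n) R
  have hO : IsOpen O := hO₁.inter isOpen_ball
  have hEO : E ⊆ O := subset_inter hEO₁ hER
  have hradius : ∀ x : En n, ∃ r : ℝ, x ∈ E → 0 < r ∧ 6 * r < δ ∧ r ≤ δ ∧ closedBall x r ⊆ O ∧
      μ (closedBall x (12 * r)) ≤ 2 * 12 ^ n * μ (closedBall x r) := by
    intro x
    by_cases hx : x ∈ E
    · obtain ⟨ρ, hρ, hρO⟩ := Metric.isOpen_iff.1 hO x (hEO hx)
      obtain ⟨r, hr, hr', hr''⟩ := exists_doubling_scale μ hμ x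
        (show 0 < min ρ (δ / 6) by positivity)
      have h1 := hr'.trans_le (min_le_left _ _)
      have h2 := hr'.trans_le (min_le_right _ _)
      exact ⟨r, fun _ => ⟨hr, by linarith, by linarith,
        (closedBall_subset_ball h1).trans hρO, hr''⟩⟩
    · exact ⟨0, fun h => absurd h hx⟩
  choose r hr using hradius
  obtain ⟨J, hJE, hdisj, hcover⟩ :=
    Vitali.exists_disjoint_subfamily_covering_enlargement_closedBall E id r δ
      (fun x hx => (hr x hx).2.2.1) 5 (by norm_num)
  simp only [id] at hdisj hcover
  have hJ : J.Countable := hdisj.countable_of_nonempty_interior fun x hx =>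
    ⟨x, ball_subset_interior_closedBall (mem_ball_self (hr x (hJE hx)).1)⟩
  have := hJ.to_subtype
  have hsum : ∀ ν : Measure (En n), ∑' x : J, ν (closedBall (x : En n) (r x)) ≤ ν O := by
    intro ν
    rw [← measure_biUnion (f := fun x => closedBall x (r x)) hJ hdisj
      fun x _ => measurableSet_closedBall]
    exact measure_mono (iUnion₂_subset fun x hx => (hr x (hJE hx)).2.2.2.1)
  let d : En n → ℝ≥0∞ := fun x => (C * μ (closedBall x (12 * r x))) ^ ((n : ℝ)⁻¹)
  have hd : ∀ x, d x ^ n = C * μ (closedBall x (12 * r x)) := fun x => by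
    rw [← ENNReal.rpow_natCast, ← ENNReal.rpow_mul, inv_mul_cancel₀ (by positivity),
      ENNReal.rpow_one]
  let P : En n → Set (En n) := fun c => {x : En n | ∀ l, l ≠ i → |x l - c l| ≤ 5 * r c}
  have hP : ∀ c, MeasurableSet (P c) := fun c => by
    simp only [P, ofPred_forall]
    refine MeasurableSet.iInter fun l => MeasurableSet.iInter fun _ =>
      measurableSet_le (Measurable.abs ?_) measurable_const
    exact ((PiLp.continuous_apply 2 _ l).measurable).sub_const _
  have hZ : MeasurableSet {x : En n | |x i| ≤ R} :=
    measurableSet_le ((PiLp.continuous_apply 2 _ i).measurable.abs) measurable_const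
  refine ⟨fun x => ∑' c : J, (P c).indicator (fun _ => 2 * d c) x,
    Measurable.tsum fun c => measurable_const.indicator (hP c), fun x => ?_, ?_⟩
  · have hsub : (fun t : ℝ => u (x + t • EuclideanSpace.single i 1)) ''
        {t | x + t • EuclideanSpace.single i 1 ∈ E} ⊆
        ⋃ c : J, {s | x ∈ P c ∧ s ∈ closedEBall (u c) (d c)} := by
      rintro _ ⟨t, ht, rfl⟩
      obtain ⟨c, hc, hsub⟩ := hcover _ ht
      have hmem := hsub (mem_closedBall_self (hr _ ht).1.le)
      refine mem_iUnion.2 ⟨⟨c, hc⟩, fun l hl => ?_, ?_⟩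
      · have h1 := (PiLp.norm_apply_le (x + t • EuclideanSpace.single i 1 - c) l).trans
          (mem_closedBall_iff_norm.1 hmem)
        simpa [hl] using h1
      · have hcE := hJE hc
        have h1 := hu c hcE _ ht (6 * r c) (by
          rw [dist_comm]
          have := (hr c hcE).1
          exact (mem_closedBall.1 hmem).trans_lt (by linarith)) (hr c hcE).2.1
        rw [mem_closedEBall, edist_comm, ← ENNReal.pow_le_pow_left_iff (n := n) (by omega), hd]
        rwa [show 12 * r c = 2 * (6 * r c) by ring]
    refine (measure_mono hsub).trans ((measure_iUnion_le _).trans (ENNReal.tsum_le_tsum fun c => ?_))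
    by_cases hx : x ∈ P c
    · rw [indicator_of_mem hx]
      simp only [hx, true_and]
      exact (Real.volume_closedEBall _ _).le
    · simp [hx]
  · rw [lintegral_tsum (β := J) fun c => (measurable_const.indicator (hP c)).aemeasurable]
    have hterm : ∀ c : J, ∫⁻ x in {x : En n | |x i| ≤ R}, (P c).indicator (fun _ => 2 * d c) x ≤
        2 * ENNReal.ofReal (2 * R) * (τ * (10 ^ n / ω) * volume (closedBall (c : En n) (r c)) +
          C * (2 * 12 ^ n) / τ * μ (closedBall (c : En n) (r c))) := by
      intro c
      have hc := hr c (hJE c.2)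
      rw [lintegral_indicator_const (hP c), Measure.restrict_apply (hP c),
        show P c ∩ {x : En n | |x i| ≤ R} =
          {x : En n | |x i| ≤ R ∧ ∀ l, l ≠ i → |x l - (c : En n) l| ≤ 5 * r c} by
            ext x; exact and_comm, (volume_box i R (5 * r c) c).2,
        show 2 * (5 * r (c : En n)) = 10 * r c by ring]
      calc 2 * d c * (ENNReal.ofReal (2 * R) * ENNReal.ofReal (10 * r c) ^ (n - 1))
          = 2 * ENNReal.ofReal (2 * R) * (d c * ENNReal.ofReal (10 * r c) ^ (n - 1)) := by ring
        _ ≤ 2 * ENNReal.ofReal (2 * R) *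
            (τ * ENNReal.ofReal (10 * r c) ^ n + d c ^ n / τ) := by
          gcongr
          exact mul_pow_pred_le hn _ _ hτ hτ'
        _ ≤ _ := by
          gcongr 2 * ENNReal.ofReal (2 * R) * (?_ + ?_)
          · rw [volume_closedBall_eq _ hc.1.le, mul_assoc]
            refine le_of_eq ?_
            congr 1
            rw [ENNReal.ofReal_mul (by norm_num), ENNReal.ofReal_ofNat, mul_pow, mul_comm (_ ^ n) ω,
              ← mul_assoc, ENNReal.div_mul_cancel hω0 hω]
          · rw [hd, div_eq_mul_inv, div_eq_mul_inv, mul_right_comm _ τ⁻¹]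
            refine mul_le_mul_left ?_ _
            rw [mul_assoc C]
            gcongr
            exact hc.2.2.2.2
    refine (ENNReal.tsum_le_tsum hterm).trans ?_
    rw [ENNReal.tsum_mul_left, ENNReal.tsum_add, ENNReal.tsum_mul_left, ENNReal.tsum_mul_left,
      mul_div_assoc (2 * ENNReal.ofReal (2 * R)), ENNReal.add_div]
    gcongr 2 * ENNReal.ofReal (2 * R) * (?_ + ?_)
    · calc τ * (10 ^ n / ω) * ∑' c : J, volume (closedBall (c : En n) (r c))
          ≤ τ * (10 ^ n / ω) * (τ * τ)⁻¹ := by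
            gcongr
            exact (hsum volume).trans ((measure_mono inter_subset_left).trans hvol.le)
        _ = (10 ^ n / ω) / τ := by
            rw [ENNReal.mul_inv (Or.inl hτ0) (Or.inl hτ'), mul_comm τ, mul_assoc, ← mul_assoc τ,
              ENNReal.mul_inv_cancel hτ0 hτ', one_mul, div_eq_mul_inv _ τ]
    · rw [div_eq_mul_inv, div_eq_mul_inv, mul_right_comm]
      gcongr
      exact (hsum μ).trans (measure_mono inter_subset_right)

/-- The images under `u` of the sections of a null set along almost every line in a coordinate
direction are null. -/
lemma ae_volume_image_section_eq_zero (hn : 2 ≤ n) (i : Fin n) {μ : Measure (En n)}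
    [IsLocallyFiniteMeasure μ] (hμ : volume ≤ μ) {u : En n → ℝ} {C : ℝ≥0∞} (hC : C ≠ ∞)
    {δ : ℝ} (hδ : 0 < δ) {E : Set (En n)} (hE : volume E = 0) {R : ℝ} (hER : E ⊆ ball 0 R)
    (hu : ∀ x ∈ E, ∀ y ∈ E, ∀ r : ℝ, dist x y < r → r < δ →
      edist (u x) (u y) ^ n ≤ C * μ (closedBall x (2 * r))) :
    ∀ᵐ x, |x i| ≤ R → volume ((fun t : ℝ => u (x + t • EuclideanSpace.single i 1)) ''
        {t | x + t • EuclideanSpace.single i 1 ∈ E}) = 0 := by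
  have hZ : MeasurableSet {x : En n | |x i| ≤ R} :=
    measurableSet_le ((PiLp.continuous_apply 2 _ i).measurable.abs) measurable_const
  choose S hSm hS hSi using fun m : ℕ => exists_sections_le hn i hμ hδ hE hER hu
    (τ := (m + 1 : ℝ≥0∞)) (by simp) (by simp)
  set A : ℝ≥0∞ := 2 * ENNReal.ofReal (2 * R) *
        (10 ^ n / volume (ball (0 : En n) 1) + C * (2 * 12 ^ n) * μ (ball 0 R))
  have hA : A ≠ ∞ := by
    refine ENNReal.mul_ne_top (by finiteness) (ENNReal.add_ne_top.2 ⟨ENNReal.div_ne_top (by simp)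
      (measure_ball_pos volume _ one_pos).ne', ENNReal.mul_ne_top (ENNReal.mul_ne_top hC
      (by simp [ENNReal.mul_eq_top])) measure_ball_lt_top.ne⟩)
  have hInt : ∫⁻ x in {x | |x i| ≤ R}, ⨅ m, S m x = 0 := by
    have hlim : Tendsto (fun m : ℕ => A / (m + 1 : ℝ≥0∞)) atTop (𝓝 0) := by
      have := (ENNReal.Tendsto.const_div (a := A) (ENNReal.tendsto_nat_nhds_top) (Or.inr hA))
      rw [ENNReal.div_top] at this
      simpa using (tendsto_add_atTop_iff_nat 1).2 this
    refine le_antisymm (ge_of_tendsto' hlim fun m => ?_) zero_le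
    exact (lintegral_mono fun x => iInf_le _ m).trans (hSi m)
  rw [lintegral_eq_zero_iff (Measurable.iInf hSm)] at hInt
  filter_upwards [(ae_restrict_iff' hZ).1 hInt] with x hx hxR
  exact le_antisymm ((le_iInf fun m => hS m x).trans (hx hxR).le) zero_le

/-- Lusin's condition (N) along almost every line in a coordinate direction. -/
lemma VolumeControl.ae_volume_image_section_eq_zero (hn : 2 ≤ n) {f : En n → En n}
    (hf : IsHomeomorph f) {C : ℝ≥0∞} (hC : C ≠ ∞) {G : ℕ → Set (En n)} (hGU : ⋃ k, G k = univ)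
    (hG : VolumeControl f C G) (i j : Fin n) {N : Set (En n)} (hN : volume N = 0) :
    ∀ᵐ x, volume ((fun t : ℝ => f (x + t • EuclideanSpace.single i 1) j) ''
        {t | x + t • EuclideanSpace.single i 1 ∈ N}) = 0 := by
  have := hf.isLocallyFiniteMeasure_pullbackVolume
  have : IsLocallyFiniteMeasure (pullbackVolume f + volume) := ⟨fun x =>
    ⟨ball x 1, ball_mem_nhds x one_pos, by
      rw [Measure.add_apply]
      exact ENNReal.add_lt_top.2 ⟨measure_ball_lt_top, measure_ball_lt_top⟩⟩⟩
  have h : ∀ k R : ℕ, ∀ᵐ x : En n, |x i| ≤ R →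
      volume ((fun t : ℝ => f (x + t • EuclideanSpace.single i 1) j) ''
        {t | x + t • EuclideanSpace.single i 1 ∈ N ∩ G k ∩ ball 0 R}) = 0 := fun k R =>
    _root_.ae_volume_image_section_eq_zero hn i (μ := pullbackVolume f + volume)
      (Measure.le_add_left le_rfl) (u := fun x => f x j) hC (δ := 1 / (k + 1)) (by positivity)
      (measure_mono_null (inter_subset_left.trans inter_subset_left) hN) inter_subset_right
      fun x hx y hy r hxy hr => by
        refine le_trans ?_ ((hG k x hx.1.2 y hy.1.2 r hxy hr).trans ?_)
        · gcongr
          exact PiLp.edist_apply_le (f x) (f y) j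
        · rw [← hf.pullbackVolume_apply]
          refine mul_le_mul_right ?_ _
          exact (measure_mono ball_subset_closedBall).trans
            ((Measure.le_add_right le_rfl : pullbackVolume f ≤ pullbackVolume f + volume) _)
  filter_upwards [ae_all_iff.2 fun k => ae_all_iff.2 (h k)] with x hx
  refine measure_mono_null (t := ⋃ k : ℕ, ⋃ R : ℕ, ⋃ _ : |x i| ≤ R,
    (fun t : ℝ => f (x + t • EuclideanSpace.single i 1) j) ''
        {t | x + t • EuclideanSpace.single i 1 ∈ N ∩ G k ∩ ball 0 R}) ?_
    (measure_iUnion_null fun k => measure_iUnion_null fun R => measure_iUnion_null fun hR =>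
      hx k R hR)
  rintro _ ⟨t, ht, rfl⟩
  obtain ⟨k, hk⟩ := mem_iUnion.1 (hGU ▸ mem_univ (x + t • EuclideanSpace.single i (1 : ℝ)))
  obtain ⟨R, hR⟩ := exists_nat_gt (max |x i| (dist (x + t • EuclideanSpace.single i (1 : ℝ)) 0))
  exact mem_iUnion.2 ⟨k, mem_iUnion.2 ⟨R, mem_iUnion.2 ⟨(le_max_left _ _).trans hR.le,
    mem_image_of_mem _ ⟨⟨ht, hk⟩, (le_max_right _ _).trans_lt hR⟩⟩⟩⟩

lemma edist_le_setLIntegral_of_lipschitzOnWith {F : ℝ → ℝ} (hF : Continuous F) {T : ℕ → Set ℝ}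
    (hT : ∀ j, MeasurableSet (T j)) (hTd : Pairwise (Function.onFun Disjoint T)) {c : ℕ → ℝ≥0}
    (hlip : ∀ j, LipschitzOnWith (c j) F (T j)) (hnull : volume (F '' (⋃ j, T j)ᶜ) = 0)
    {h : ℝ → ℝ≥0∞} (hc : ∀ j, ∀ t ∈ T j, (c j : ℝ≥0∞) ≤ h t) (a b : ℝ) :
    edist (F a) (F b) ≤ ∫⁻ t in uIcc a b, h t := by
  have hsub : uIcc (F a) (F b) ⊆ F '' (⋃ j, T j)ᶜ ∪ ⋃ j, F '' (T j ∩ uIcc a b) := by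
    refine (intermediate_value_uIcc hF.continuousOn).trans ?_
    rintro _ ⟨t, ht, rfl⟩
    by_cases h : t ∈ ⋃ j, T j
    · obtain ⟨j, hj⟩ := mem_iUnion.1 h
      exact Or.inr (mem_iUnion.2 ⟨j, mem_image_of_mem F ⟨hj, ht⟩⟩)
    · exact Or.inl (mem_image_of_mem F h)
  have hj : ∀ j, volume (F '' (T j ∩ uIcc a b)) ≤ ∫⁻ t in T j ∩ uIcc a b, h t := by
    intro j
    have h1 := ((hlip j).mono inter_subset_left : LipschitzOnWith (c j) F
      (T j ∩ uIcc a b)).hausdorffMeasure_image_le zero_le_one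
    rw [hausdorffMeasure_real, ENNReal.rpow_one] at h1
    refine h1.trans ?_
    rw [← setLIntegral_const]
    exact setLIntegral_mono' ((hT j).inter measurableSet_uIcc) fun t ht => hc j t ht.1
  calc edist (F a) (F b) = volume (uIcc (F a) (F b)) := by
        rw [uIcc, Real.volume_Icc, edist_dist, Real.dist_eq, max_sub_min_eq_abs']
    _ ≤ 0 + ∑' j, ∫⁻ t in T j ∩ uIcc a b, h t := by
        refine (measure_mono hsub).trans ((measure_union_le _ _).trans ?_)
        gcongr
        · exact hnull.le
        · exact (measure_iUnion_le _).trans (ENNReal.tsum_le_tsum hj)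
    _ ≤ _ := by
        rw [zero_add, ← lintegral_iUnion (fun j => (hT j).inter measurableSet_uIcc)
          fun i j hij => (hTd hij).mono inter_subset_left inter_subset_left]
        exact lintegral_mono_set (iUnion_subset fun j => inter_subset_right)

lemma absolutelyContinuousOnInterval_of_edist_le {F : ℝ → ℝ} {h : ℝ → ℝ≥0∞} (hm : Measurable h)
    (hh : ∀ a b, ∫⁻ t in uIcc a b, h t ≠ ∞)
    (hF : ∀ a b, edist (F a) (F b) ≤ ∫⁻ t in uIcc a b, h t) (a b : ℝ) :
    AbsolutelyContinuousOnInterval F a b := by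
  have hi : ∀ a b, IntervalIntegrable (fun t => (h t).toReal) volume a b := fun a b =>
    (intervalIntegrable_iff' (by simp)).2 (integrable_toReal_of_lintegral_ne_top hm.aemeasurable (hh a b))
  have hle : ∀ x y, dist (F x) (F y) ≤
      dist (∫ t in a..x, (h t).toReal) (∫ t in a..y, (h t).toReal) := by
    intro x y
    rw [dist_comm (∫ t in a..x, (h t).toReal), Real.dist_eq, Real.dist_eq,
      intervalIntegral.integral_interval_sub_left (hi _ _) (hi _ _),
      intervalIntegral.abs_integral_eq_abs_integral_uIoc, uIoc, ← integral_Icc_eq_integral_Ioc, ← uIcc,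
      integral_toReal hm.aemeasurable (ae_lt_top hm (hh x y)), abs_of_nonneg ENNReal.toReal_nonneg]
    rw [← Real.dist_eq, ← ENNReal.ofReal_le_iff_le_toReal (hh x y), ← edist_dist]
    exact hF x y
  refine squeeze_zero' (Eventually.of_forall fun E => Finset.sum_nonneg fun _ _ => dist_nonneg)
    (Eventually.of_forall fun E => Finset.sum_le_sum fun k _ => hle _ _)
    ((hi a b).absolutelyContinuousOnInterval_intervalIntegral left_mem_uIcc)

lemma ae_mem_uniqueDiffWithinAt (T : Set ℝ) : ∀ᵐ t : ℝ, t ∈ T → UniqueDiffWithinAt ℝ T t := by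
  filter_upwards [(countable_setOfPred_isolated_right_within (s := T)).ae_notMem volume]
    with t ht htT
  rw [uniqueDiffWithinAt_iff_accPt]
  have h1 : (𝓝[T ∩ Ioi t] t).NeBot := ⟨fun h => ht ⟨htT, h⟩⟩
  refine h1.mono ?_
  simp only [nhdsWithin, inf_assoc, inf_principal]
  exact inf_le_inf_left _ (principal_mono.2 fun s hs => ⟨ne_of_gt hs.2, hs.1⟩)

lemma integral_mul_deriv_eq_of_lipschitz_pieces {F : ℝ → ℝ} (hF : Continuous F) {T : ℕ → Set ℝ}
    (hT : ∀ j, MeasurableSet (T j)) (hTd : Pairwise (Function.onFun Disjoint T)) {c : ℕ → ℝ≥0}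
    (hlip : ∀ j, LipschitzOnWith (c j) F (T j)) (hnull : volume (F '' (⋃ j, T j)ᶜ) = 0)
    (hae : ∀ᵐ t, t ∈ ⋃ j, T j)
    {h : ℝ → ℝ≥0∞} (hm : Measurable h) (hh : ∀ a b, ∫⁻ t in uIcc a b, h t ≠ ∞)
    (hc : ∀ j, ∀ t ∈ T j, (c j : ℝ≥0∞) ≤ h t) {D : ℝ → ℝ}
    (hD : ∀ᵐ t, ∀ j, t ∈ T j → HasDerivWithinAt F (D t) (T j) t)
    {φ : ℝ → ℝ} (hφ : ContDiff ℝ 1 φ) (hφc : HasCompactSupport φ) :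
    ∫ t, F t * deriv φ t = - ∫ t, φ t * D t := by
  have hac := absolutelyContinuousOnInterval_of_edist_le hm hh
    (edist_le_setLIntegral_of_lipschitzOnWith hF hT hTd hlip hnull hc)
  obtain ⟨R, hR0, hR⟩ := hφc.isBounded.subset_ball_lt 0 0
  have hab : -R ≤ R := by linarith
  have hsupp : tsupport φ ⊆ Ioo (-R) R := by
    rw [Real.ball_eq_Ioo] at hR
    simpa using hR
  have hφa : φ (-R) = 0 := image_eq_zero_of_notMem_tsupport fun h => (hsupp h).1.false
  have hφb : φ R = 0 := image_eq_zero_of_notMem_tsupport fun h => (hsupp h).2.false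
  have hderiv : ∀ᵐ t, t ∈ Ioo (-R) R → deriv F t = D t := by
    filter_upwards [(hac (-R) R).ae_differentiableAt, hae, hD,
      ae_all_iff.2 fun j => ae_mem_uniqueDiffWithinAt (T j)] with t h1 h2 h3 h4 ht
    obtain ⟨j, hj⟩ := mem_iUnion.1 h2
    have h5 := (h1 (by rw [uIcc_of_le hab]; exact Ioo_subset_Icc_self ht)).hasDerivAt
    exact (h4 j hj).eq_deriv _ h5.hasDerivWithinAt (h3 j hj)
  have hparts := (hac (-R) R).integral_mul_deriv_eq_deriv_mul
    hφ.contDiffOn.absolutelyContinuousOnInterval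
  rw [hφa, hφb, mul_zero, mul_zero, sub_zero, zero_sub,
    intervalIntegral.integral_eq_integral_of_support_subset,
    intervalIntegral.integral_eq_integral_of_support_subset] at hparts
  · rw [hparts]
    congr 1
    refine integral_congr_ae ?_
    filter_upwards [hderiv] with t ht
    by_cases h : t ∈ Ioo (-R) R
    · rw [ht h, mul_comm]
    · rw [image_eq_zero_of_notMem_tsupport fun h' => h (hsupp h'), mul_zero, zero_mul]
  · refine fun t ht => Ioo_subset_Ioc_self (hsupp (subset_tsupport φ fun h => ht ?_))
    simp [h]
  · refine fun t ht => Ioo_subset_Ioc_self (hsupp ?_)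
    refine support_deriv_subset (f := φ) fun h => ht ?_
    simp [h]

/-- A measurable derivative along the pieces of a Lipschitz decomposition. -/
lemma exists_measurable_fderivWithin_of_lipschitz_pieces {f : En n → En n} {B : ℕ → Set (En n)}
    (hB : ∀ j, MeasurableSet (B j)) (hBd : Pairwise (Function.onFun Disjoint B)) {c : ℕ → ℝ≥0}
    (hlip : ∀ j, LipschitzOnWith (c j) f (B j)) :
    ∃ g : En n → En n →L[ℝ] En n, Measurable g ∧
      ∀ᵐ x, ∀ j, x ∈ B j → HasFDerivWithinAt f (g x) (B j) x := by
  choose F hF hfF using fun j => (hlip j).extend_finite_dimension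
  obtain ⟨g, hg, hgF⟩ := exists_measurable_piecewise B hB (fun j => fderiv ℝ (F j))
    (fun j => measurable_fderiv ℝ (F j))
    (fun i j hij x hx => absurd hx.2 (disjoint_left.1 (hBd hij) hx.1))
  refine ⟨g, hg, ?_⟩
  filter_upwards [ae_all_iff.2 fun j => (hF j).ae_differentiableAt (μ := volume)] with x hx j hj
  rw [hgF j hj]
  exact (hx j).hasFDerivAt.hasFDerivWithinAt.congr (hfF j) (hfF j hj)

lemma ae_nnnorm_le_of_lipschitzOnWith {f : En n → En n} {s : Set (En n)} (hs : MeasurableSet s)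
    {K : ℝ≥0} (hK : LipschitzOnWith K f s) {g : En n → En n →L[ℝ] En n}
    (hg : ∀ x ∈ s, HasFDerivWithinAt f (g x) s x) : ∀ᵐ x, x ∈ s → ‖g x‖₊ ≤ K := by
  have h : ApproximatesLinearOn f (0 : En n →L[ℝ] En n) s K := fun x hx y hy => by
    simpa using hK.norm_sub_le hx hy
  simpa [ae_restrict_iff' hs] using h.norm_fderiv_sub_le volume hs g hg

lemma VolumeControl.exists_derivative {f : En n → En n} (hn : n ≠ 0)
    (hf : IsHomeomorph f) {C : ℝ≥0∞} (hC : C ≠ ∞) {G : ℕ → Set (En n)} (hGU : ⋃ k, G k = univ)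
    (hG : VolumeControl f C G) :
    ∃ (g : En n → En n →L[ℝ] En n) (B : ℕ → Set (En n)) (c : ℕ → ℝ≥0), Measurable g ∧
      (∀ j, MeasurableSet (B j)) ∧ Pairwise (Function.onFun Disjoint B) ∧
      volume (⋃ j, B j)ᶜ = 0 ∧ (∀ j, LipschitzOnWith (c j) f (B j)) ∧
      (∀ j, ∀ x ∈ B j, (c j : ℝ≥0∞) ^ n ≤
        C * (4 ^ n * volume (ball (0 : En n) 1)) * (volumeDensity f x + 1)) ∧
      (∀ j, ∀ x ∈ B j, HasFDerivWithinAt f (g x) (B j) x) ∧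
      (∀ᵐ x, ‖g x‖ₑ ^ n ≤ C * (4 ^ n * volume (ball (0 : En n) 1)) * volumeDensity f x) ∧
      ∀ᵐ x, volumeDensity f x ≤ ENNReal.ofReal |(g x).det| := by
  obtain ⟨B₀, c, hB₀, hBd₀, hBn₀, hlip₀, hc₀⟩ :=
    hG.exists_lipschitz_decomposition hn hf hC hGU one_ne_zero one_ne_top
  obtain ⟨g, hg, hgB₀⟩ := exists_measurable_fderivWithin_of_lipschitz_pieces hB₀ hBd₀ hlip₀
  set N := toMeasurable volume {x | ¬ ∀ j, x ∈ B₀ j → HasFDerivWithinAt f (g x) (B₀ j) x}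
  have hN : volume N = 0 := by rw [measure_toMeasurable]; exact hgB₀
  have hNm : MeasurableSet N := measurableSet_toMeasurable _ _
  set B : ℕ → Set (En n) := fun j => B₀ j \ N
  have hB : ∀ j, MeasurableSet (B j) := fun j => (hB₀ j).diff hNm
  have hBd : Pairwise (Function.onFun Disjoint B) := fun i j hij =>
    (hBd₀ hij).mono sdiff_subset sdiff_subset
  have hBn : volume (⋃ j, B j)ᶜ = 0 := by
    refine measure_mono_null (t := (⋃ j, B₀ j)ᶜ ∪ N) ?_ (measure_union_null hBn₀ hN)
    rw [← iUnion_sdiff, compl_sdiff, union_comm]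
  have hlip : ∀ j, LipschitzOnWith (c j) f (B j) := fun j => (hlip₀ j).mono sdiff_subset
  have hgB : ∀ j, ∀ x ∈ B j, HasFDerivWithinAt f (g x) (B j) x := by
    rintro j x ⟨hx, hxN⟩
    have := fun h => hxN (subset_toMeasurable volume _ h)
    exact (not_not.1 this j hx).mono sdiff_subset
  have hae : ∀ᵐ x, x ∈ ⋃ j, B j := hBn
  refine ⟨g, B, c, hg, hB, hBd, hBn, hlip, fun j x hx => hc₀ j x hx.1, hgB, ?_, ?_⟩
  · set C' := C * (4 ^ n * volume (ball (0 : En n) 1))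
    have hC' : C' ≠ ∞ :=
      ENNReal.mul_ne_top hC (ENNReal.mul_ne_top (by simp) measure_ball_lt_top.ne)
    have hm : ∀ m : ℕ, ∀ᵐ x, ‖g x‖ₑ ^ n ≤ C' * (volumeDensity f x + (m + 1 : ℝ≥0∞)⁻¹) := by
      intro m
      obtain ⟨A, a, hA, -, hAn, hAlip, ha⟩ := hG.exists_lipschitz_decomposition hn hf hC hGU
        (ε := (m + 1 : ℝ≥0∞)⁻¹) (by simp) (by simp)
      have hAae : ∀ᵐ x, x ∈ ⋃ j, A j := hAn
      have hnorm : ∀ j k, ∀ᵐ x, x ∈ B j ∩ A k → ‖g x‖₊ ≤ a k := fun j k =>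
        ae_nnnorm_le_of_lipschitzOnWith ((hB j).inter (hA k)) ((hAlip k).mono inter_subset_right)
          fun x hx => (hgB j x hx.1).mono inter_subset_left
      filter_upwards [hae, hAae, ae_all_iff.2 fun j => ae_all_iff.2 (hnorm j)] with x h1 h2 h3
      obtain ⟨j, hj⟩ := mem_iUnion.1 h1
      obtain ⟨k, hk⟩ := mem_iUnion.1 h2
      refine le_trans ?_ (ha k x hk)
      gcongr
      exact ENNReal.coe_le_coe.2 (h3 j k ⟨hj, hk⟩)
    filter_upwards [ae_all_iff.2 hm] with x hx
    have hlim : Tendsto (fun m : ℕ => C' * (volumeDensity f x + (m + 1 : ℝ≥0∞)⁻¹)) atTop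
        (𝓝 (C' * (volumeDensity f x + 0))) := by
      refine ENNReal.Tendsto.const_mul (tendsto_const_nhds.add ?_) (Or.inr hC')
      simpa using (tendsto_add_atTop_iff_nat 1).2 ENNReal.tendsto_inv_nat_nhds_zero
    rw [add_zero] at hlim
    exact ge_of_tendsto' hlim hx
  · refine ae_le_of_forall_setLIntegral_le_of_sigmaFinite (measurable_volumeDensity f)
      fun s hs _ => ?_
    have hsplit : ∀ h : En n → ℝ≥0∞, ∫⁻ x in s, h x = ∑' j, ∫⁻ x in s ∩ B j, h x := fun h => by
      rw [← lintegral_iUnion (fun j => hs.inter (hB j))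
        fun i j hij => (hBd hij).mono inter_subset_right inter_subset_right, ← inter_iUnion]
      refine setLIntegral_congr ?_
      filter_upwards [hae] with x hx
      exact propext ⟨fun h => ⟨h, hx⟩, fun h => h.1⟩
    rw [hsplit, hsplit]
    refine ENNReal.tsum_le_tsum fun j => ?_
    rw [lintegral_abs_det_fderiv_eq_addHaar_image volume (hs.inter (hB j))
      (fun x hx => (hgB j x hx.2).mono inter_subset_right) hf.injective.injOn,
      ← hf.pullbackVolume_apply]
    exact Measure.setLIntegral_rnDeriv_le _

lemma measurePreserving_shear (e : En n) :
    MeasurePreserving (fun z : En n × ℝ => (z.2, z.1 + z.2 • e)) :=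
  (MeasurePreserving.skew_product (g := fun (t : ℝ) (x : En n) => x + t • e)
    (MeasurePreserving.id volume) (by fun_prop)
    (ae_of_all _ fun t => (measurePreserving_add_right volume (t • e)).map_eq)).comp
    Measure.measurePreserving_swap

lemma ae_ae_add_smul (e : En n) {p : En n → Prop} (hp : ∀ᵐ x, p x) :
    ∀ᵐ x, ∀ᵐ t : ℝ, p (x + t • e) :=
  Measure.ae_ae_of_ae_prod <|
    (Measure.quasiMeasurePreserving_snd.comp
      (measurePreserving_shear e).quasiMeasurePreserving).ae hp

lemma ae_setLIntegral_uIcc_add_smul_ne_top (e : En n) {h : En n → ℝ≥0∞} (hm : Measurable h)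
    (hh : ∀ R : ℝ, ∫⁻ x in ball 0 R, h x ≠ ∞) :
    ∀ᵐ x, ∀ a b : ℝ, ∫⁻ t in uIcc a b, h (x + t • e) ≠ ∞ := by
  have hR : ∀ R : ℕ, ∀ᵐ x, x ∈ ball (0 : En n) R → ∫⁻ t in Icc (-R : ℝ) R, h (x + t • e) < ∞ := by
    intro R
    rw [← ae_restrict_iff' measurableSet_ball]
    refine ae_lt_top (Measurable.lintegral_prod_right' (f := fun z : En n × ℝ => h (z.1 + z.2 • e))
      (by fun_prop)) ?_
    rw [lintegral_lintegral_swap (by fun_prop)]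
    refine ne_top_of_le_ne_top (b := ∫⁻ t in Icc (-R : ℝ) R, ∫⁻ x in ball (0 : En n) (R + R * ‖e‖), h x)
      ?_ ?_
    · rw [lintegral_const]
      exact ENNReal.mul_ne_top (hh _) (by simp)
    · refine setLIntegral_mono measurable_const fun t ht => ?_
      rw [(measurePreserving_add_right volume (t • e)).setLIntegral_comp_emb
        (measurableEmbedding_addRight _) h]
      refine lintegral_mono_set ?_
      rintro _ ⟨x, hx, rfl⟩
      rw [mem_ball_zero_iff] at hx ⊢
      have := abs_le.2 ht
      calc ‖x + t • e‖ ≤ ‖x‖ + |t| * ‖e‖ := by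
            simpa [norm_smul] using norm_add_le x (t • e)
        _ < R + R * ‖e‖ := add_lt_add_of_lt_of_le hx (by gcongr)
  filter_upwards [ae_all_iff.2 hR] with x hx a b
  obtain ⟨R, hR⟩ := exists_nat_gt (max ‖x‖ (max |a| |b|))
  refine ne_top_of_le_ne_top (hx R ?_).ne (lintegral_mono_set ?_)
  · simpa using (le_max_left _ _).trans_lt hR
  · have ha := ((le_max_left _ _).trans (le_max_right _ _)).trans_lt hR
    have hb := ((le_max_right _ _).trans (le_max_right _ _)).trans_lt hR
    exact uIcc_subset_Icc (abs_le.1 ha.le) (abs_le.1 hb.le)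

lemma integral_eq_integral_integral_add_smul (i : Fin n) {G : En n → ℝ} (hG : Integrable G) :
    ∫ x, G x = ∫ x : En n, (Icc (0 : ℝ) 1).indicator 1 (x i) *
      ∫ t : ℝ, G (x + t • EuclideanSpace.single i 1) := by
  set e : En n := EuclideanSpace.single i 1
  set H : ℝ × En n → ℝ := fun z => (Icc (0 : ℝ) 1).indicator 1 z.1 * G z.2
  have hI : Integrable ((Icc (0 : ℝ) 1).indicator (1 : ℝ → ℝ)) :=
    (integrable_indicator_iff measurableSet_Icc).2 (integrable_const (1 : ℝ))
  have hH : Integrable H (volume.prod volume) := hI.mul_prod hG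
  have hci : Measurable fun x : En n => x i := (PiLp.continuous_apply 2 _ i).measurable
  have hΘ : MeasurePreserving (fun z : En n × ℝ => (z.1 i, z.1 + z.2 • e)) := by
    have h2 : MeasurePreserving (fun z : En n × ℝ => (z.1, z.1 i - z.2)) :=
      MeasurePreserving.skew_product (g := fun (y : En n) (t : ℝ) => y i - t)
        (MeasurePreserving.id volume) (by fun_prop)
        (ae_of_all _ fun y => (Measure.measurePreserving_sub_left volume (y i)).map_eq)
    have h3 := (Measure.measurePreserving_swap.comp h2).comp
      (Measure.measurePreserving_swap.comp (measurePreserving_shear e))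
    convert h3 using 1
    · ext z <;> simp [e]
    · rfl
  have hHΘ : Integrable (fun z : En n × ℝ => H (z.1 i, z.1 + z.2 • e)) (volume.prod volume) :=
    hΘ.integrable_comp_of_integrable hH
  calc ∫ x, G x = ∫ z, H z ∂(volume.prod volume) := by
        rw [integral_prod_mul, integral_indicator_one measurableSet_Icc]
        simp
    _ = ∫ z : En n × ℝ, H (z.1 i, z.1 + z.2 • e) ∂(volume.prod volume) := by
        conv_lhs => rw [← Measure.volume_eq_prod, ← hΘ.map_eq]
        rw [integral_map hΘ.measurable.aemeasurable]
        · rfl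
        · rw [hΘ.map_eq]; exact hH.aestronglyMeasurable
    _ = _ := by
        rw [integral_prod _ hHΘ]
        refine integral_congr_ae (ae_of_all _ fun x => ?_)
        simp only [H]
        rw [integral_const_mul]

lemma integral_eq_neg_of_ae_integral_add_smul_eq_neg (i : Fin n) {G₁ G₂ : En n → ℝ}
    (h₁ : Integrable G₁) (h₂ : Integrable G₂)
    (h : ∀ᵐ x, ∫ t : ℝ, G₁ (x + t • EuclideanSpace.single i 1) =
      - ∫ t : ℝ, G₂ (x + t • EuclideanSpace.single i 1)) :
    ∫ x, G₁ x = - ∫ x, G₂ x := by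
  rw [integral_eq_integral_integral_add_smul i h₁, integral_eq_integral_integral_add_smul i h₂,
    ← integral_neg]
  refine integral_congr_ae ?_
  filter_upwards [h] with x hx
  rw [hx, mul_neg]

lemma IsHomeomorph.lintegral_ball_volumeDensity_ne_top {f : En n → En n} (hf : IsHomeomorph f)
    (R : ℝ) : ∫⁻ x in ball 0 R, volumeDensity f x ≠ ∞ := by
  refine ne_top_of_le_ne_top ?_ (Measure.setLIntegral_rnDeriv_le _)
  rw [hf.pullbackVolume_apply]
  exact (hf.volume_image_ball_lt_top 0 R).ne

lemma VolumeControl.ae_integral_line_mul_fderiv {f : En n → En n} (hn : 2 ≤ n)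
    (hf : IsHomeomorph f) {C : ℝ≥0∞} (hC : C ≠ ∞) {G : ℕ → Set (En n)} (hGU : ⋃ k, G k = univ)
    (hG : VolumeControl f C G) {g : En n → En n →L[ℝ] En n} {B : ℕ → Set (En n)} {c : ℕ → ℝ≥0}
    {C' : ℝ≥0∞} (hC' : C' ≠ ∞)
    (hB : ∀ j, MeasurableSet (B j)) (hBd : Pairwise (Function.onFun Disjoint B))
    (hBn : volume (⋃ j, B j)ᶜ = 0) (hlip : ∀ j, LipschitzOnWith (c j) f (B j))
    (hc : ∀ j, ∀ x ∈ B j, (c j : ℝ≥0∞) ^ n ≤ C' * (volumeDensity f x + 1))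
    (hg : ∀ j, ∀ x ∈ B j, HasFDerivWithinAt f (g x) (B j) x)
    {φ : En n → ℝ} (hφ : ContDiff ℝ 1 φ) (hφc : HasCompactSupport φ) (i l : Fin n) :
    ∀ᵐ x, ∫ t : ℝ, (fun y => fderiv ℝ φ y (EuclideanSpace.single i 1) * f y l)
        (x + t • EuclideanSpace.single i 1) =
      - ∫ t : ℝ, (fun y => φ y * g y (EuclideanSpace.single i 1) l)
        (x + t • EuclideanSpace.single i 1) := by
  have hh : ∀ R : ℝ, ∫⁻ x in ball (0 : En n) R, (1 + C' * (volumeDensity f x + 1)) ≠ ∞ := by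
    intro R
    have hb : volume (ball (0 : En n) R) ≠ ∞ := measure_ball_lt_top.ne
    rw [lintegral_add_left measurable_const,
      lintegral_const_mul _ ((measurable_volumeDensity f).add_const _),
      lintegral_add_right _ measurable_const]
    simpa [hb] using ENNReal.mul_ne_top hC'
      (ENNReal.add_ne_top.2 ⟨hf.lintegral_ball_volumeDensity_ne_top R, hb⟩)
  have hm : Measurable fun x => 1 + C' * (volumeDensity f x + 1) := by
    have := measurable_volumeDensity f
    fun_prop
  set e : En n := EuclideanSpace.single i 1
  have he1 : ‖e‖ = 1 := by simp [e]
  have hBae : ∀ᵐ x, x ∈ ⋃ j, B j := hBn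
  filter_upwards [ae_setLIntegral_uIcc_add_smul_ne_top e hm hh, ae_ae_add_smul e hBae,
    hG.ae_volume_image_section_eq_zero hn hf hC hGU i l hBn] with x h1 h2 h3
  have hline : Continuous fun t : ℝ => x + t • e := by fun_prop
  have hline' : ∀ t : ℝ, HasDerivAt (fun t : ℝ => x + t • e) e t := fun t => by
    simpa using ((hasDerivAt_id t).smul_const e).const_add x
  have hφ' : ∀ t : ℝ, HasDerivAt (fun t : ℝ => φ (x + t • e)) (fderiv ℝ φ (x + t • e) e) t :=
    fun t => ((hφ.differentiable one_ne_zero _).hasFDerivAt).comp_hasDerivAt t (hline' t)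
  have hiso : Isometry fun t : ℝ => x + t • e := Isometry.of_dist_eq fun s t => by
    rw [dist_add_left, dist_eq_norm, ← sub_smul, norm_smul, he1, mul_one, Real.dist_eq,
      Real.norm_eq_abs]
  have key := integral_mul_deriv_eq_of_lipschitz_pieces (F := fun t => f (x + t • e) l)
    (T := fun j => (fun t : ℝ => x + t • e) ⁻¹' B j) (c := c)
    (h := fun t => 1 + C' * (volumeDensity f (x + t • e) + 1))
    (D := fun t => g (x + t • e) e l) (φ := fun t => φ (x + t • e))
    ((PiLp.continuous_apply 2 _ l).comp (hf.continuous.comp hline))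
    (fun j => hline.measurable (hB j)) (fun j k hjk => (hBd hjk).preimage _)
    (fun j => LipschitzOnWith.of_dist_le_mul fun s hs t ht => ?_)
    ?_ ?_ (hm.comp hline.measurable) h1 (fun j t ht => ?_) (ae_of_all _ fun t j ht => ?_)
    (hφ.comp (by fun_prop)) (hφc.comp_isClosedEmbedding hiso.isClosedEmbedding)
  · simp only [(hφ' _).deriv] at key
    simpa only [mul_comm] using key
  · refine le_trans ?_ ((hlip j).dist_le_mul _ hs _ ht |>.trans_eq ?_)
    · exact (PiLp.lipschitzWith_ofLp 2 _).dist_le_mul _ _ |>.trans' (dist_le_pi_dist _ _ l) |>.trans_eq (by simp)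
    · rw [hiso.dist_eq]
  · rw [← preimage_iUnion]; exact h3
  · rw [← preimage_iUnion]; exact h2
  · refine le_trans ?_ (add_le_add_right (hc j _ ht) 1)
    rcases le_total (c j : ℝ≥0∞) 1 with h | h
    · exact h.trans le_self_add
    · exact (le_self_pow h (by omega)).trans le_add_self
  · have := (hg j _ ht).comp_hasDerivWithinAt t (hline' t).hasDerivWithinAt (mapsTo_preimage _ _)
    exact (EuclideanSpace.proj (𝕜 := ℝ) l).hasFDerivAt.comp_hasDerivWithinAt t this

lemma hasWeakGradOn_univ_of_single {f : En n → En n} {g : En n → En n →L[ℝ] En n}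
    (hf : Continuous f) (hg : LocallyIntegrable g)
    (h : ∀ φ : En n → ℝ, ContDiff ℝ 1 φ → HasCompactSupport φ → ∀ i l : Fin n,
      ∫ x, fderiv ℝ φ x (EuclideanSpace.single i 1) * f x l =
        - ∫ x, φ x * g x (EuclideanSpace.single i 1) l) :
    HasWeakGradOn f g univ := by
  intro φ hφ hφc _ v
  have hφ' : Continuous (fderiv ℝ φ) := hφ.continuous_fderiv one_ne_zero
  have h1 : ∀ v, Integrable fun x => fderiv ℝ φ x v • f x := fun v => by
    refine ((hφ'.clm_apply continuous_const).smul hf).integrable_of_hasCompactSupport ?_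
    exact (hφc.fderiv_apply (𝕜 := ℝ) v).smul_right
  have h2 : Integrable fun x => φ x • g x :=
    hg.integrable_smul_left_of_hasCompactSupport hφ.continuous hφc
  have h2' : ∀ v, Integrable fun x => φ x • g x v := fun v => by
    simpa using h2.apply_continuousLinearMap v
  let L : En n →ₗ[ℝ] En n :=
    { toFun := fun v => ∫ x, fderiv ℝ φ x v • f x
      map_add' := fun v w => by
        rw [← integral_add (h1 v) (h1 w)]
        simp [add_smul]
      map_smul' := fun a v => by
        simp [mul_smul, integral_smul] }
  have hL : L = (-(∫ x, φ x • g x) : En n →L[ℝ] En n) := by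
    refine (EuclideanSpace.basisFun (Fin n) ℝ).toBasis.ext fun i => ?_
    simp only [L, OrthonormalBasis.coe_toBasis, EuclideanSpace.basisFun_apply]
    ext l
    have := h φ hφ hφc i l
    have e1 := (EuclideanSpace.proj (𝕜 := ℝ) l).integral_comp_comm (h1 (EuclideanSpace.single i 1))
    have e2 := (EuclideanSpace.proj (𝕜 := ℝ) l).integral_comp_comm (h2' (EuclideanSpace.single i 1))
    simp at e1 e2
    simp [ContinuousLinearMap.integral_apply h2, ← e1, ← e2, this]
  have := congrArg (fun T => T v) hL
  simpa [L, ContinuousLinearMap.integral_apply h2] using this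

/-- A homeomorphism `f : ℝⁿ → ℝⁿ` with `K^fine_f(x) ≤ K < ∞` everywhere is
quasiconformal: `f ∈ W^{1,n}_loc` and `‖∇f‖ⁿ ≤ K' |det ∇f|` a.e. for some `K' < ∞`. -/
theorem finely_qc_implies_qc (hn : 2 ≤ n) (f : En n → En n) (hf : IsHomeomorph f)
    (K : ℝ) (hK : ∀ x, Kfine f x ≤ ENNReal.ofReal K) :
    ∃ g : En n → (En n →L[ℝ] En n),
      HasWeakGradOn f g univ ∧
      LocallyIntegrable f ∧
      LocallyIntegrable (fun x => ‖g x‖ ^ n) ∧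
      ∃ K' : ℝ, ∀ᵐ x, ‖g x‖ ^ n ≤ K' * |LinearMap.det ((g x : En n →ₗ[ℝ] En n))| := by
  obtain ⟨C, G, hC, hGU, hG⟩ := exists_volumeControl hn hf K hK
  obtain ⟨g, B, c, hgm, hB, hBd, hBn, hlip, hc, hg, hgρ, hρg⟩ :=
    hG.exists_derivative (by omega) hf hC hGU
  set C' := C * (4 ^ n * volume (ball (0 : En n) 1))
  have hC' : C' ≠ ∞ :=
    ENNReal.mul_ne_top hC (ENNReal.mul_ne_top (by simp) measure_ball_lt_top.ne)
  have hball : ∀ x : En n, ∃ R : ℝ, ball (0 : En n) R ∈ 𝓝 x := fun x =>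
    ⟨‖x‖ + 1, isOpen_ball.mem_nhds (by simp)⟩
  have hgn : LocallyIntegrable fun x => ‖g x‖ ^ n := by
    intro x
    obtain ⟨R, hR⟩ := hball x
    refine ⟨_, hR, (hgm.norm.pow_const n).aestronglyMeasurable, ?_⟩
    refine (lintegral_mono_ae (g := fun x => C' * volumeDensity f x)
      (ae_restrict_of_ae ?_)).trans_lt ?_
    · filter_upwards [hgρ] with x hx
      simpa using hx
    · rw [lintegral_const_mul _ (measurable_volumeDensity f)]
      exact ENNReal.mul_lt_top hC'.lt_top (hf.lintegral_ball_volumeDensity_ne_top R).lt_top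
  have hgl : LocallyIntegrable g := by
    refine ((locallyIntegrable_const (1 : ℝ)).add hgn).mono hgm.aestronglyMeasurable
      (ae_of_all _ fun x => ?_)
    simp only [Pi.add_apply]
    rw [Real.norm_of_nonneg (by positivity)]
    rcases le_total ‖g x‖ 1 with h | h
    · exact h.trans (le_add_of_nonneg_right (by positivity))
    · exact (le_self_pow₀ h (by omega)).trans (le_add_of_nonneg_left zero_le_one)
  refine ⟨g, hasWeakGradOn_univ_of_single hf.continuous hgl fun φ hφ hφc i l => ?_,
    hf.continuous.locallyIntegrable, hgn, C'.toReal, ?_⟩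
  · refine integral_eq_neg_of_ae_integral_add_smul_eq_neg i ?_ ?_
      (hG.ae_integral_line_mul_fderiv hn hf hC hGU hC' hB hBd hBn hlip hc hg hφ hφc i l)
    · have hφ' : Continuous (fderiv ℝ φ) := hφ.continuous_fderiv one_ne_zero
      have hl : Continuous fun x => f x l := (PiLp.continuous_apply 2 _ l).comp hf.continuous
      exact ((hφ'.clm_apply continuous_const).mul hl).integrable_of_hasCompactSupport
        (hφc.fderiv_apply (𝕜 := ℝ) _).mul_right
    · have h2 := (hgl.integrable_smul_left_of_hasCompactSupport hφ.continuous hφc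
        ).apply_continuousLinearMap (EuclideanSpace.single i 1)
      simpa using (EuclideanSpace.proj (𝕜 := ℝ) l).integrable_comp h2
  · filter_upwards [hgρ, hρg] with x h1 h2
    have h3 := h1.trans (mul_le_mul_right h2 _)
    have h4 := ENNReal.toReal_mono (ENNReal.mul_ne_top hC' ofReal_ne_top) h3
    rwa [ENNReal.toReal_mul, ENNReal.toReal_ofReal (abs_nonneg _), ENNReal.toReal_pow,
      toReal_enorm] at h4

end
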